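/- arXiv:2602.23326 — 4 statements merged into one kernel-verified Lean document; each statement's English description precedes it below -/
import Mathlib

section
/- Let Θ be a square-integrable real random variable, G ~ N(0,1) independent of Θ, and define F : [0,∞) → [0,∞) by F(γ) := E[(E[Θ | √γ Θ + G])²]. Then: (a) F is non-decreasing on [0,∞); (b) F is continuous on [0,∞); and (c) for any λ > 0 and any γ_0 ≥ 0, the iterates γ_{k+1} = λ² F(γ_k) form a monotone sequence converging to a fixed point γ_∞ ∈ [0, λ² E[Θ²]] satisfying γ_∞ = λ² F(γ_∞). -/
open MeasureTheory ProbabilityTheory Filter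
open scoped NNReal ENNReal

noncomputable section

/-- `F(γ) = E[(E[Θ | √γ Θ + W])²]`, the state-evolution map for rank-one estimation, where the
conditional expectation is with respect to the σ-algebra generated by the observation
`√γ Θ + W`. -/
def seF {Ω : Type*} [MeasurableSpace Ω] (ν : Measure Ω) (Θ W : Ω → ℝ) (γ : ℝ) : ℝ :=
  ∫ ω, ((ν[Θ | MeasurableSpace.comap (fun ω' => Real.sqrt γ * Θ ω' + W ω')
      (inferInstance : MeasurableSpace ℝ)]) ω) ^ 2 ∂ν


/-- Gaussian likelihood. -/
def gp (s θ y : ℝ) : ℝ := gaussianPDFReal (s * θ) 1 y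

/-- Unnormalised posterior moments. -/
def gJ (k : ℕ) (μ : Measure ℝ) (s y : ℝ) : ℝ := ∫ θ, θ ^ k * gp s θ y ∂μ

lemma gp_pos (s θ y : ℝ) : 0 < gp s θ y := gaussianPDFReal_pos _ _ _ one_ne_zero

lemma gp_le_one (s θ y : ℝ) : gp s θ y ≤ 1 := by
  unfold gp gaussianPDFReal
  have h1 : (Real.sqrt (2 * Real.pi * ((1 : ℝ≥0) : ℝ)))⁻¹ ≤ 1 := by
    apply inv_le_one_of_one_le₀
    rw [Real.one_le_sqrt]
    have := Real.pi_gt_three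
    simp; linarith
  have h2 : Real.exp (-(y - s * θ) ^ 2 / (2 * ((1 : ℝ≥0) : ℝ))) ≤ 1 := by
    rw [Real.exp_le_one_iff]
    have := sq_nonneg (y - s * θ)
    simp only [NNReal.coe_one]
    linarith
  calc _ ≤ (1 : ℝ) * 1 := by gcongr
    _ = 1 := one_mul 1

lemma continuous_gp : Continuous (fun q : ℝ × ℝ × ℝ => gp q.1 q.2.1 q.2.2) := by
  unfold gp gaussianPDFReal
  fun_prop

lemma integral_gp (s θ : ℝ) : ∫ y, gp s θ y = 1 := integral_gaussianPDFReal_eq_one _ one_ne_zero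

lemma integrable_gp (s θ : ℝ) : Integrable (fun y => gp s θ y) := integrable_gaussianPDFReal _ _

lemma continuous_gp2 (s : ℝ) : Continuous (fun q : ℝ × ℝ => gp s q.1 q.2) :=
  continuous_gp.comp (by fun_prop : Continuous fun q : ℝ × ℝ => (s, q.1, q.2))

lemma continuous_gpθ (s y : ℝ) : Continuous (fun θ : ℝ => gp s θ y) :=
  continuous_gp.comp (by fun_prop : Continuous fun θ : ℝ => (s, θ, y))

lemma integrable_gmom {k : ℕ} {μ : Measure ℝ} (hk : Integrable (fun θ => θ ^ k) μ)
    (s y : ℝ) : Integrable (fun θ => θ ^ k * gp s θ y) μ := by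
  refine Integrable.mono' hk.norm ?_ (ae_of_all _ fun θ => ?_)
  · exact ((continuous_id.pow k).mul (continuous_gpθ s y)).aestronglyMeasurable
  · rw [norm_mul]
    have h1 : ‖gp s θ y‖ ≤ 1 := by
      rw [Real.norm_of_nonneg (gp_pos _ _ _).le]; exact gp_le_one _ _ _
    exact mul_le_of_le_one_right (norm_nonneg _) h1

lemma continuous_gJ {k : ℕ} {μ : Measure ℝ} (hk : Integrable (fun θ => θ ^ k) μ) :
    Continuous (fun q : ℝ × ℝ => gJ k μ q.1 q.2) := by
  unfold gJ
  refine continuous_of_dominated (bound := fun θ => ‖θ ^ k‖) (fun q => ?_) (fun q => ?_) hk.norm ?_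
  · exact (integrable_gmom hk _ _).aestronglyMeasurable
  · refine ae_of_all _ fun θ => ?_
    rw [norm_mul]
    have h1 : ‖gp q.1 θ q.2‖ ≤ 1 := by
      rw [Real.norm_of_nonneg (gp_pos _ _ _).le]; exact gp_le_one _ _ _
    exact mul_le_of_le_one_right (norm_nonneg _) h1
  · refine ae_of_all _ fun θ => ?_
    exact continuous_const.mul
      (continuous_gp.comp (by fun_prop : Continuous fun q : ℝ × ℝ => (q.1, θ, q.2)))

lemma integrable_gprod {k : ℕ} {μ : Measure ℝ} [IsProbabilityMeasure μ]
    (hk : Integrable (fun θ => θ ^ k) μ) (s : ℝ) :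
    Integrable (fun q : ℝ × ℝ => q.1 ^ k * gp s q.1 q.2) (μ.prod volume) := by
  rw [integrable_prod_iff]
  · refine ⟨ae_of_all _ fun θ => (integrable_gp s θ).const_mul (θ ^ k), ?_⟩
    refine hk.norm.congr (ae_of_all _ fun θ => ?_)
    simp only [norm_mul]
    rw [integral_const_mul]
    simp_rw [Real.norm_of_nonneg (gp_pos _ _ _).le]
    rw [integral_gp, mul_one]
  · exact ((continuous_fst.pow k).mul (continuous_gp2 s)).aestronglyMeasurable

lemma integrable_gJ {k : ℕ} {μ : Measure ℝ} [IsProbabilityMeasure μ]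
    (hk : Integrable (fun θ => θ ^ k) μ) (s : ℝ) : Integrable (gJ k μ s) :=
  (integrable_gprod hk s).integral_prod_right

lemma integral_gJ {k : ℕ} {μ : Measure ℝ} [IsProbabilityMeasure μ]
    (hk : Integrable (fun θ => θ ^ k) μ) (s : ℝ) : ∫ y, gJ k μ s y = ∫ θ, θ ^ k ∂μ := by
  unfold gJ
  rw [← integral_integral_swap (f := fun θ y => θ ^ k * gp s θ y) (integrable_gprod hk s)]
  simp_rw [integral_const_mul, integral_gp, mul_one]

lemma gJ0_pos {μ : Measure ℝ} [IsProbabilityMeasure μ] (s y : ℝ) : 0 < gJ 0 μ s y := by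
  have h0 : Integrable (fun θ : ℝ => θ ^ 0) μ := by simp
  unfold gJ
  rw [integral_pos_iff_support_of_nonneg _ (integrable_gmom h0 s y)]
  · have : Function.support (fun θ => θ ^ 0 * gp s θ y) = Set.univ := by
      ext θ; simp [(gp_pos s θ y).ne']
    rw [this]; simp
  · intro θ; simpa using (gp_pos s θ y).le

lemma gJ_cs {μ : Measure ℝ} [IsProbabilityMeasure μ] (h1 : Integrable (fun θ : ℝ => θ ^ 1) μ)
    (h2 : Integrable (fun θ : ℝ => θ ^ 2) μ) (s y : ℝ) :
    gJ 1 μ s y ^ 2 / gJ 0 μ s y ≤ gJ 2 μ s y := by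
  have h0 : Integrable (fun θ : ℝ => θ ^ 0) μ := by simp
  have hp := gJ0_pos (μ := μ) s y
  have key : ∀ c : ℝ, 0 ≤ gJ 2 μ s y - 2 * c * gJ 1 μ s y + c ^ 2 * gJ 0 μ s y := by
    intro c
    unfold gJ
    rw [← integral_const_mul, ← integral_const_mul, ← integral_sub, ← integral_add]
    · refine integral_nonneg fun θ => ?_
      have : θ ^ 2 * gp s θ y - 2 * c * (θ ^ 1 * gp s θ y) + c ^ 2 * (θ ^ 0 * gp s θ y)
          = (θ - c) ^ 2 * gp s θ y := by ring
      simp only [this]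
      exact mul_nonneg (sq_nonneg _) (gp_pos _ _ _).le
    · exact (integrable_gmom h2 s y).sub ((integrable_gmom h1 s y).const_mul _)
    · exact (integrable_gmom h0 s y).const_mul _
    · exact integrable_gmom h2 s y
    · exact (integrable_gmom h1 s y).const_mul _
  have := key (gJ 1 μ s y / gJ 0 μ s y)
  have e : gJ 2 μ s y - 2 * (gJ 1 μ s y / gJ 0 μ s y) * gJ 1 μ s y
      + (gJ 1 μ s y / gJ 0 μ s y) ^ 2 * gJ 0 μ s y
      = gJ 2 μ s y - gJ 1 μ s y ^ 2 / gJ 0 μ s y := by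
    field_simp; ring
  linarith

/-- The analytic form of `F`. -/
def gF (μ : Measure ℝ) (s : ℝ) : ℝ := ∫ y, gJ 1 μ s y ^ 2 / gJ 0 μ s y

lemma pratt_cont (g M : ℝ → ℝ → ℝ) (cg : Continuous (fun q : ℝ × ℝ => g q.1 q.2))
    (c2 : Continuous (fun q : ℝ × ℝ => M q.1 q.2)) (gnn : ∀ s y, 0 ≤ g s y)
    (gle : ∀ s y, g s y ≤ M s y) (iM : ∀ s, Integrable (M s)) (C0 : ℝ)
    (hM : ∀ s, ∫ y, M s y = C0) : Continuous (fun s => ∫ y, g s y) := by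
  have cgy : ∀ s, Continuous (g s) := fun s =>
    cg.comp (by fun_prop : Continuous fun y : ℝ => (s, y))
  have c2y : ∀ s, Continuous (M s) := fun s =>
    c2.comp (by fun_prop : Continuous fun y : ℝ => (s, y))
  have cgs : ∀ y, Continuous (fun s => g s y) := fun y =>
    cg.comp (by fun_prop : Continuous fun s : ℝ => (s, y))
  have c2s : ∀ y, Continuous (fun s => M s y) := fun y =>
    c2.comp (by fun_prop : Continuous fun s : ℝ => (s, y))
  have ig : ∀ s, Integrable (g s) := fun s =>
    (iM s).mono' (cgy s).aestronglyMeasurable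
      (ae_of_all _ fun y => by rw [Real.norm_of_nonneg (gnn s y)]; exact gle s y)
  rw [continuous_iff_continuousAt]
  intro t
  -- first piece
  have A : Tendsto (fun s => ∫ y, min (g s y) (M t y)) (nhds t)
      (nhds (∫ y, min (g t y) (M t y))) := by
    refine tendsto_integral_filter_of_dominated_convergence (M t) ?_ ?_
      (iM t) ?_
    · exact Eventually.of_forall fun s => ((cgy s).min (c2y t)).aestronglyMeasurable
    · refine Eventually.of_forall fun s => ae_of_all _ fun y => ?_
      rw [Real.norm_of_nonneg (le_min (gnn s y) ((gnn t y).trans (gle t y)))]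
      exact min_le_right _ _
    · exact ae_of_all _ fun y => (((cgs y).min continuous_const).tendsto t)
  have B : Tendsto (fun s => ∫ y, min (M s y) (M t y)) (nhds t)
      (nhds (∫ y, min (M t y) (M t y))) := by
    refine tendsto_integral_filter_of_dominated_convergence (M t) ?_ ?_
      (iM t) ?_
    · exact Eventually.of_forall fun s => ((c2y s).min (c2y t)).aestronglyMeasurable
    · refine Eventually.of_forall fun s => ae_of_all _ fun y => ?_
      rw [Real.norm_of_nonneg (le_min ((gnn s y).trans (gle s y)) ((gnn t y).trans (gle t y)))]
      exact min_le_right _ _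
    · exact ae_of_all _ fun y => (((c2s y).min continuous_const).tendsto t)
  simp only [min_self] at B
  have e1 : (fun y => min (g t y) (M t y)) = g t := by
    ext y; exact min_eq_left (gle t y)
  rw [e1] at A
  have imin : ∀ s, Integrable (fun y => min (g s y) (M t y)) := fun s =>
    (ig s).inf (iM t)
  have imin2 : ∀ s, Integrable (fun y => min (M s y) (M t y)) := fun s =>
    (iM s).inf (iM t)
  have C : Tendsto (fun s => ∫ y, (g s y - min (g s y) (M t y))) (nhds t) (nhds 0) := by
    have B' : Tendsto (fun s => (∫ y, M t y) - ∫ y, min (M s y) (M t y)) (nhds t)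
        (nhds 0) := by
      simpa using B.const_sub (∫ y, M t y)
    refine squeeze_zero (fun s => integral_nonneg fun y => ?_) (fun s => ?_) B'
    · exact sub_nonneg.2 (min_le_left _ _)
    · have : (∫ y, M t y) = ∫ y, M s y := by
        rw [hM, hM]
      rw [this, ← integral_sub (iM s) (imin2 s)]
      refine integral_mono ((ig s).sub (imin s)) ((iM s).sub (imin2 s)) fun y => ?_
      have := gle s y
      simp only [Pi.sub_apply]
      rcases le_total (g s y) (M t y) with h | h
      · rw [min_eq_left h, sub_self]; exact sub_nonneg.2 (min_le_left _ _)
      · rw [min_eq_right h, min_eq_right (h.trans this)]; linarith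
  have D := A.add C
  rw [add_zero] at D
  refine D.congr fun s => ?_
  rw [integral_sub (ig s) (imin s)]; ring

lemma continuous_gF {μ : Measure ℝ} [IsProbabilityMeasure μ]
    (h1 : Integrable (fun θ : ℝ => θ ^ 1) μ)
    (h2 : Integrable (fun θ : ℝ => θ ^ 2) μ) : Continuous (gF μ) := by
  have h0 : Integrable (fun θ : ℝ => θ ^ 0) μ := by simp
  exact pratt_cont (fun s y => gJ 1 μ s y ^ 2 / gJ 0 μ s y) (gJ 2 μ)
    (((continuous_gJ h1).pow 2).div (continuous_gJ h0) fun q => (gJ0_pos _ _).ne')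
    (continuous_gJ h2) (fun s y => div_nonneg (sq_nonneg _) (gJ0_pos _ _).le)
    (fun s y => gJ_cs h1 h2 s y) (fun s => integrable_gJ h2 s) _ (fun s => integral_gJ h2 s)

lemma joint_law {Ω : Type*} [MeasurableSpace Ω] (ν : Measure Ω) [IsProbabilityMeasure ν]
    (Θ : Ω → ℝ) (hΘm : Measurable Θ)
    (W : Ω → ℝ) (hWm : Measurable W) (hW : ν.map W = gaussianReal 0 1)
    (hindep : IndepFun Θ W ν) (s : ℝ) :
    ν.map (fun ω => (Θ ω, s * Θ ω + W ω)) = ((ν.map Θ).prod volume).withDensity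
      (fun q => ENNReal.ofReal (gp s q.1 q.2)) := by
  have : IsProbabilityMeasure (ν.map Θ) := Measure.isProbabilityMeasure_map hΘm.aemeasurable
  have hp := (indepFun_iff_map_prod_eq_prod_map_map hΘm.aemeasurable hWm.aemeasurable).1 hindep
  have hm : Measurable (fun q : ℝ × ℝ => (q.1, s * q.1 + q.2)) := by fun_prop
  have e : ν.map (fun ω => (Θ ω, s * Θ ω + W ω))
      = ((ν.map Θ).prod (gaussianReal 0 1)).map (fun q : ℝ × ℝ => (q.1, s * q.1 + q.2)) := by
    rw [← hW, ← hp, Measure.map_map hm (hΘm.prodMk hWm)]; rfl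
  have mg : Measurable (fun q : ℝ × ℝ => ENNReal.ofReal (gp s q.1 q.2)) :=
    (continuous_gp2 s).measurable.ennreal_ofReal
  rw [e]
  refine Measure.ext fun A hA => ?_
  rw [Measure.map_apply hm hA, Measure.prod_apply (hm hA), withDensity_apply _ hA,
    ← lintegral_indicator hA, lintegral_prod _ (mg.indicator hA).aemeasurable]
  refine lintegral_congr fun θ => ?_
  have hA' : MeasurableSet (Prod.mk θ ⁻¹' A) := measurable_prodMk_left hA
  have e2 : Prod.mk θ ⁻¹' ((fun q : ℝ × ℝ => (q.1, s * q.1 + q.2)) ⁻¹' A)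
      = (fun w => s * θ + w) ⁻¹' (Prod.mk θ ⁻¹' A) := rfl
  rw [e2, ← Measure.map_apply (by fun_prop) hA', gaussianReal_map_const_add, zero_add,
    gaussianReal_of_var_ne_zero _ one_ne_zero, withDensity_apply _ hA', ← lintegral_indicator hA']
  rfl

lemma marg_law {Ω : Type*} [MeasurableSpace Ω] (ν : Measure Ω) [IsProbabilityMeasure ν]
    (Θ : Ω → ℝ) (hΘm : Measurable Θ)
    (W : Ω → ℝ) (hWm : Measurable W) (hW : ν.map W = gaussianReal 0 1)
    (hindep : IndepFun Θ W ν) (s : ℝ) :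
    ν.map (fun ω => s * Θ ω + W ω) = volume.withDensity
      (fun y => ENNReal.ofReal (gJ 0 (ν.map Θ) s y)) := by
  have : IsProbabilityMeasure (ν.map Θ) := Measure.isProbabilityMeasure_map hΘm.aemeasurable
  have h0 : Integrable (fun θ : ℝ => θ ^ 0) (ν.map Θ) := by simp
  have hj := joint_law ν Θ hΘm W hWm hW hindep s
  have mg : Measurable (fun q : ℝ × ℝ => ENNReal.ofReal (gp s q.1 q.2)) :=
    (continuous_gp2 s).measurable.ennreal_ofReal
  have e : ν.map (fun ω => s * Θ ω + W ω)
      = (ν.map (fun ω => (Θ ω, s * Θ ω + W ω))).map Prod.snd := by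
    rw [Measure.map_map measurable_snd (by fun_prop)]; rfl
  rw [e, hj]
  refine Measure.ext fun A hA => ?_
  rw [Measure.map_apply measurable_snd hA, withDensity_apply _ (measurable_snd hA),
    withDensity_apply _ hA, ← lintegral_indicator (measurable_snd hA), ← lintegral_indicator hA,
    lintegral_prod_symm _ (mg.indicator (measurable_snd hA)).aemeasurable]
  refine lintegral_congr fun y => ?_
  by_cases hy : y ∈ A
  · have : ∀ θ : ℝ, (θ, y) ∈ (Prod.snd ⁻¹' A : Set (ℝ × ℝ)) := fun θ => hy
    simp only [Set.indicator_of_mem (this _), Set.indicator_of_mem hy]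
    unfold gJ
    rw [ofReal_integral_eq_lintegral_ofReal (integrable_gmom h0 s y)
      (ae_of_all _ fun θ => by simpa using (gp_pos s θ y).le)]
    simp
  · have : ∀ θ : ℝ, (θ, y) ∉ (Prod.snd ⁻¹' A : Set (ℝ × ℝ)) := fun θ => hy
    simp only [Set.indicator_of_notMem (this _), Set.indicator_of_notMem hy]
    simp

lemma seF_eq {Ω : Type*} [MeasurableSpace Ω] (ν : Measure Ω) [IsProbabilityMeasure ν]
    (Θ : Ω → ℝ) (hΘm : Measurable Θ) (hΘi : Integrable Θ ν)
    (W : Ω → ℝ) (hWm : Measurable W) (hW : ν.map W = gaussianReal 0 1)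
    (hindep : IndepFun Θ W ν) (γ : ℝ) :
    seF ν Θ W γ = gF (ν.map Θ) (Real.sqrt γ) := by
  unfold seF
  set s := Real.sqrt γ with hs
  set μ := ν.map Θ with hμ
  have : IsProbabilityMeasure μ := Measure.isProbabilityMeasure_map hΘm.aemeasurable
  have h0 : Integrable (fun θ : ℝ => θ ^ 0) μ := by simp
  have h1 : Integrable (fun θ : ℝ => θ ^ 1) μ := by
    simp only [pow_one]
    rw [hμ, integrable_map_measure (by fun_prop) hΘm.aemeasurable]; exact hΘi
  have hj := joint_law ν Θ hΘm W hWm hW hindep s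
  have hm := marg_law ν Θ hΘm W hWm hW hindep s
  rw [← hμ] at hj hm
  set Y : Ω → ℝ := fun ω => s * Θ ω + W ω with hY
  have hYm : Measurable Y := by fun_prop
  have mg : Measurable (fun q : ℝ × ℝ => ENNReal.ofReal (gp s q.1 q.2)) :=
    (continuous_gp2 s).measurable.ennreal_ofReal
  have c0 : Continuous (gJ 0 μ s) :=
    (continuous_gJ h0).comp (by fun_prop : Continuous fun y : ℝ => (s, y))
  have c1 : Continuous (gJ 1 μ s) :=
    (continuous_gJ h1).comp (by fun_prop : Continuous fun y : ℝ => (s, y))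
  have m0 : Measurable (fun y => ENNReal.ofReal (gJ 0 μ s y)) := c0.measurable.ennreal_ofReal
  set h : ℝ → ℝ := fun y => gJ 1 μ s y / gJ 0 μ s y with hh
  have ch : Continuous h := c1.div c0 fun y => (gJ0_pos _ _).ne'
  have hmul : ∀ y, (ENNReal.ofReal (gJ 0 μ s y)).toReal • h y = gJ 1 μ s y := by
    intro y
    have := gJ0_pos (μ := μ) s y
    rw [ENNReal.toReal_ofReal this.le, smul_eq_mul, hh]
    field_simp
  have hint : Integrable (fun ω => h (Y ω)) ν := by
    have : Integrable h (ν.map Y) := by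
      rw [hm, integrable_withDensity_iff_integrable_smul' m0 (by simp)]
      simp_rw [hmul]
      exact integrable_gJ h1 s
    exact this.comp_measurable hYm
  have key : (fun ω => h (Y ω)) =ᵐ[ν] ν[Θ | MeasurableSpace.comap Y inferInstance] := by
    refine ae_eq_condExp_of_forall_setIntegral_eq hYm.comap_le hΘi
      (fun _ _ _ => hint.integrableOn) ?_ ?_
    · rintro _ ⟨B, hB, rfl⟩ -
      have l : ∫ ω in Y ⁻¹' B, h (Y ω) ∂ν = ∫ y in B, gJ 1 μ s y := by
        rw [← setIntegral_map hB ch.aestronglyMeasurable hYm.aemeasurable, hm,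
          ← integral_indicator hB, integral_withDensity_eq_integral_toReal_smul m0 (by simp),
          ← integral_indicator hB]
        refine integral_congr_ae (ae_of_all _ fun y => ?_)
        by_cases hy : y ∈ B
        · simp only [Set.indicator_of_mem hy, hmul]
        · simp only [Set.indicator_of_notMem hy, smul_zero]
      have hB' : MeasurableSet (Prod.snd ⁻¹' B : Set (ℝ × ℝ)) := measurable_snd hB
      have r : ∫ ω in Y ⁻¹' B, Θ ω ∂ν = ∫ y in B, gJ 1 μ s y := by
        have : ∫ ω in Y ⁻¹' B, Θ ω ∂ν
            = ∫ q in (Prod.snd ⁻¹' B : Set (ℝ × ℝ)), q.1 ∂(ν.map (fun ω => (Θ ω, Y ω))) := by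
          rw [setIntegral_map hB' (by fun_prop) (by fun_prop)]; rfl
        rw [this, hj, ← integral_indicator hB',
          integral_withDensity_eq_integral_toReal_smul mg (by simp), ← integral_indicator hB]
        have e : (fun q : ℝ × ℝ => (ENNReal.ofReal (gp s q.1 q.2)).toReal •
            (Prod.snd ⁻¹' B : Set (ℝ × ℝ)).indicator (fun q => q.1) q)
            = (Prod.snd ⁻¹' B : Set (ℝ × ℝ)).indicator (fun q => q.1 ^ 1 * gp s q.1 q.2) := by
          ext q
          rw [ENNReal.toReal_ofReal (gp_pos _ _ _).le]
          by_cases hq : q ∈ (Prod.snd ⁻¹' B : Set (ℝ × ℝ))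
          · simp only [Set.indicator_of_mem hq, smul_eq_mul]; ring
          · simp only [Set.indicator_of_notMem hq, smul_zero]
        rw [e, integral_prod_symm _ ((integrable_gprod h1 s).indicator hB')]
        refine integral_congr_ae (ae_of_all _ fun y => ?_)
        by_cases hy : y ∈ B
        · have : ∀ θ : ℝ, (θ, y) ∈ (Prod.snd ⁻¹' B : Set (ℝ × ℝ)) := fun θ => hy
          simp only [Set.indicator_of_mem (this _), Set.indicator_of_mem hy]
          rfl
        · have : ∀ θ : ℝ, (θ, y) ∉ (Prod.snd ⁻¹' B : Set (ℝ × ℝ)) := fun θ => hy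
          simp only [Set.indicator_of_notMem (this _), Set.indicator_of_notMem hy]
          simp
      rw [l, r]
    · exact ((ch.measurable.comp (comap_measurable Y)).stronglyMeasurable).aestronglyMeasurable
  have e1 : ∫ ω, (ν[Θ | MeasurableSpace.comap Y inferInstance] ω) ^ 2 ∂ν
      = ∫ ω, (h (Y ω)) ^ 2 ∂ν :=
    integral_congr_ae (key.mono fun ω hω => by simp only [← hω])
  rw [e1]
  have e2 : ∫ ω, (h (Y ω)) ^ 2 ∂ν = ∫ y, h y ^ 2 ∂(ν.map Y) :=
    (integral_map hYm.aemeasurable (ch.pow 2).aestronglyMeasurable).symm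
  rw [e2, hm, integral_withDensity_eq_integral_toReal_smul m0 (by simp)]
  unfold gF
  refine integral_congr_ae (ae_of_all _ fun y => ?_)
  have := gJ0_pos (μ := μ) s y
  simp only [hh]
  rw [ENNReal.toReal_ofReal this.le, smul_eq_mul]
  field_simp

lemma integral_sq_condExp_le {Ω : Type*} {m m0 : MeasurableSpace Ω} (ν : Measure Ω)
    [IsProbabilityMeasure ν] (hm : m ≤ m0) (X : Ω → ℝ) (hX : MemLp X 2 ν) :
    ∫ ω, (ν[X | m] ω) ^ 2 ∂ν ≤ ∫ ω, X ω ^ 2 ∂ν := by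
  have h := condVar_ae_eq_condExp_sq_sub_sq_condExp hm hX
  have hi : Integrable (fun ω => (ν[X | m] ω) ^ 2) ν := (hX.condExp one_le_two).integrable_sq
  have hle : ∀ᵐ ω ∂ν, (ν[X | m] ω) ^ 2 ≤ ν[X ^ 2 | m] ω := by
    have hnn : 0 ≤ᵐ[ν] Var[X; ν | m] :=
      condExp_nonneg (ae_of_all _ fun ω => sq_nonneg _)
    filter_upwards [h, hnn] with ω h1 h2
    rw [h1] at h2
    simpa using h2
  calc _ ≤ ∫ ω, ν[X ^ 2 | m] ω ∂ν := integral_mono_ae hi integrable_condExp hle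
    _ = _ := by rw [integral_condExp hm]; rfl

lemma seF_mono {Ω : Type*} [MeasurableSpace Ω] (ν : Measure Ω) [IsProbabilityMeasure ν]
    (Θ : Ω → ℝ) (hΘm : Measurable Θ) (hΘ2 : MemLp Θ 2 ν)
    (W : Ω → ℝ) (hWm : Measurable W) (hW : ν.map W = gaussianReal 0 1)
    (hindep : IndepFun Θ W ν) : MonotoneOn (seF ν Θ W) (Set.Ici 0) := by
  intro γ1 hγ1 γ2 hγ2 hle
  have hΘi : Integrable Θ ν := hΘ2.integrable one_le_two
  rcases hle.eq_or_lt with rfl | hlt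
  · exact le_rfl
  have hγ1' : 0 ≤ γ1 := hγ1
  have h2pos : 0 < γ2 := lt_of_le_of_lt hγ1' hlt
  have hs2 : 0 < Real.sqrt γ2 := Real.sqrt_pos.2 h2pos
  obtain ⟨a, ha⟩ : ∃ a, a = Real.sqrt γ1 / Real.sqrt γ2 := ⟨_, rfl⟩
  have ha1 : a * Real.sqrt γ2 = Real.sqrt γ1 := by rw [ha]; field_simp
  have ha2 : a ^ 2 ≤ 1 := by
    rw [ha, div_pow, Real.sq_sqrt hγ1', Real.sq_sqrt h2pos.le, div_le_one h2pos]; exact hle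
  obtain ⟨b, hb⟩ : ∃ b, b = Real.sqrt (1 - a ^ 2) := ⟨_, rfl⟩
  have hab : a ^ 2 + b ^ 2 = 1 := by rw [hb, Real.sq_sqrt (by linarith)]; ring
  obtain ⟨P, hP⟩ : ∃ P : Measure (Ω × ℝ), P = ν.prod (gaussianReal 0 1) := ⟨_, rfl⟩
  have : IsProbabilityMeasure P := by rw [hP]; infer_instance
  have hPf : P.map Prod.fst = ν := by rw [hP]; exact Measure.map_fst_prod.trans (by simp)
  have hPs : P.map Prod.snd = gaussianReal 0 1 := by
    rw [hP]; exact Measure.map_snd_prod.trans (by simp)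
  -- lifted variables
  obtain ⟨T, hT⟩ : ∃ T : Ω × ℝ → ℝ, T = fun q => Θ q.1 := ⟨_, rfl⟩
  obtain ⟨V, hV⟩ : ∃ V : Ω × ℝ → ℝ, V = fun q => a * W q.1 + b * q.2 := ⟨_, rfl⟩
  have hTm : Measurable T := by rw [hT]; fun_prop
  have hVm : Measurable V := by rw [hV]; fun_prop
  have hTi : Integrable T P := by
    rw [hT, hP]; exact hΘi.comp_fst _
  have hTlaw : P.map T = ν.map Θ := by
    rw [← hPf, Measure.map_map hΘm measurable_fst, hT]; rfl
  have hVlaw : P.map V = gaussianReal 0 1 := by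
    have i1 : IndepFun (fun q : Ω × ℝ => a * W q.1) (fun q : Ω × ℝ => b * q.2) P := by
      rw [hP]
      exact indepFun_prod (X := fun ω => a * W ω) (Y := fun x : ℝ => b * x)
        (by fun_prop) (by fun_prop)
    have l1 : P.map (fun q : Ω × ℝ => a * W q.1)
        = gaussianReal (a * 0) (NNReal.mk (a ^ 2) (sq_nonneg a) * 1) := by
      rw [← gaussianReal_map_const_mul, ← hW, ← hPf, Measure.map_map hWm measurable_fst,
        Measure.map_map (by fun_prop) (by fun_prop)]; rfl
    have l2 : P.map (fun q : Ω × ℝ => b * q.2)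
        = gaussianReal (b * 0) (NNReal.mk (b ^ 2) (sq_nonneg b) * 1) := by
      rw [← gaussianReal_map_const_mul, ← hPs,
        Measure.map_map (by fun_prop) (by fun_prop)]; rfl
    have := gaussianReal_add_gaussianReal_of_indepFun i1 l1 l2
    rw [hV]
    refine this.trans ?_
    congr 1
    · ring
    · ext; push_cast; simpa using hab
  have hTV : IndepFun T V P := by
    have i0 : IndepFun (fun q : Ω × ℝ => (Θ q.1, W q.1)) (fun q : Ω × ℝ => q.2) P := by
      rw [hP]
      exact indepFun_prod (X := fun ω => (Θ ω, W ω)) (Y := fun x : ℝ => x)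
        (by fun_prop) (by fun_prop)
    have e0 := (indepFun_iff_map_prod_eq_prod_map_map (by fun_prop) (by fun_prop)).1 i0
    have hp := (indepFun_iff_map_prod_eq_prod_map_map hΘm.aemeasurable hWm.aemeasurable).1 hindep
    have e1 : P.map (fun q : Ω × ℝ => (Θ q.1, W q.1)) = (ν.map Θ).prod (ν.map W) := by
      rw [← hp]
      conv_rhs => rw [← hPf]
      rw [Measure.map_map (by fun_prop) measurable_fst]; rfl
    have : IsProbabilityMeasure (ν.map Θ) := Measure.isProbabilityMeasure_map hΘm.aemeasurable
    have : IsProbabilityMeasure (ν.map W) := Measure.isProbabilityMeasure_map hWm.aemeasurable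
    have : IsProbabilityMeasure (P.map (fun q : Ω × ℝ => q.2)) :=
      Measure.isProbabilityMeasure_map (by fun_prop)
    rw [e1] at e0
    have e3 : P.map (fun q : Ω × ℝ => (Θ q.1, (W q.1, q.2)))
        = (ν.map Θ).prod ((ν.map W).prod (P.map (fun q : Ω × ℝ => q.2))) := by
      rw [← Measure.prodAssoc_prod, ← e0, Measure.map_map (by fun_prop) (by fun_prop)]; rfl
    have i3 : IndepFun T (fun q : Ω × ℝ => (W q.1, q.2)) P := by
      rw [indepFun_iff_map_prod_eq_prod_map_map (by fun_prop) (by fun_prop), hTlaw, hT, e3]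
      congr 1
      have := congrArg (Measure.map Prod.snd) e3
      rw [Measure.map_snd_prod, Measure.map_map (by fun_prop) (by fun_prop)] at this
      rw [measure_univ, one_smul] at this
      exact this.symm
    have := i3.comp (φ := id) (ψ := fun x : ℝ × ℝ => a * x.1 + b * x.2) measurable_id
      (by fun_prop)
    rw [hV]; exact this
  have E1 : seF ν Θ W γ1 = seF P T V γ1 := by
    rw [seF_eq ν Θ hΘm hΘi W hWm hW hindep, seF_eq P T hTm hTi V hVm hVlaw hTV, hTlaw]
  rw [E1]
  unfold seF
  obtain ⟨Y2, hY2⟩ : ∃ Y2 : Ω → ℝ, Y2 = fun ω => Real.sqrt γ2 * Θ ω + W ω := ⟨_, rfl⟩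
  obtain ⟨Y1, hY1⟩ : ∃ Y1 : Ω × ℝ → ℝ, Y1 = fun q => Real.sqrt γ1 * T q + V q := ⟨_, rfl⟩
  rw [← hY2, ← hY1]
  have hY2m : Measurable Y2 := by rw [hY2]; fun_prop
  have hY1m : Measurable Y1 := by rw [hY1]; fun_prop
  have hY12 : ∀ q, Y1 q = a * Y2 q.1 + b * q.2 := by
    intro q; rw [hY1, hY2, hV, hT]; simp only [← ha1]; ring
  obtain ⟨H, hH⟩ : ∃ H : Ω → ℝ, H = ν[Θ | MeasurableSpace.comap Y2 inferInstance] := ⟨_, rfl⟩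
  have hHi : Integrable H ν := by rw [hH]; exact integrable_condExp
  have hH2 : MemLp H 2 ν := by rw [hH]; exact hΘ2.condExp one_le_two
  have hHPi : Integrable (fun q : Ω × ℝ => H q.1) P := by rw [hP]; exact hHi.comp_fst _
  have hHP2 : MemLp (fun q : Ω × ℝ => H q.1) 2 P := by rw [hP]; exact hH2.comp_fst _
  rw [← hH]
  have key : P[fun q => H q.1 | MeasurableSpace.comap Y1 inferInstance]
      =ᵐ[P] P[T | MeasurableSpace.comap Y1 inferInstance] := by
    refine ae_eq_condExp_of_forall_setIntegral_eq hY1m.comap_le hTi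
      (fun _ _ _ => integrable_condExp.integrableOn) ?_
      stronglyMeasurable_condExp.aestronglyMeasurable
    rintro _ ⟨B, hB, rfl⟩ -
    rw [setIntegral_condExp hY1m.comap_le hHPi ⟨B, hB, rfl⟩]
    have hB1 : MeasurableSet (Y1 ⁻¹' B) := hY1m hB
    rw [← integral_indicator hB1, ← integral_indicator hB1]
    have iH := hHPi.indicator hB1
    have iT := hTi.indicator hB1
    rw [hP] at iH iT ⊢
    rw [integral_prod_symm _ iH, integral_prod_symm _ iT]
    refine integral_congr_ae (ae_of_all _ fun g => ?_)
    have hmB : Measurable (fun y : ℝ => a * y + b * g) := by fun_prop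
    have hset : MeasurableSet[MeasurableSpace.comap Y2 inferInstance]
        (Y2 ⁻¹' ((fun y : ℝ => a * y + b * g) ⁻¹' B)) := ⟨_, hmB hB, rfl⟩
    have hset' : MeasurableSet (Y2 ⁻¹' ((fun y : ℝ => a * y + b * g) ⁻¹' B)) :=
      hY2m (hmB hB)
    have hc := setIntegral_condExp hY2m.comap_le hΘi hset
    rw [← hH, ← integral_indicator hset', ← integral_indicator hset'] at hc
    have aux : ∀ f : Ω → ℝ, (fun ω => (Y1 ⁻¹' B).indicator (fun q : Ω × ℝ => f q.1) (ω, g))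
        = (Y2 ⁻¹' ((fun y : ℝ => a * y + b * g) ⁻¹' B)).indicator f := by
      intro f
      ext ω
      have : (ω, g) ∈ Y1 ⁻¹' B ↔ ω ∈ Y2 ⁻¹' ((fun y : ℝ => a * y + b * g) ⁻¹' B) := by
        simp only [Set.mem_preimage, hY12]
      by_cases hω : ω ∈ Y2 ⁻¹' ((fun y : ℝ => a * y + b * g) ⁻¹' B)
      · rw [Set.indicator_of_mem hω, Set.indicator_of_mem (this.2 hω)]
      · rw [Set.indicator_of_notMem hω, Set.indicator_of_notMem (fun h => hω (this.1 h))]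
    rw [hT]
    simp only [aux]
    exact hc
  have e4 : ∫ q, (P[T | MeasurableSpace.comap Y1 inferInstance] q) ^ 2 ∂P
      = ∫ q, (P[fun q => H q.1 | MeasurableSpace.comap Y1 inferInstance] q) ^ 2 ∂P :=
    integral_congr_ae (key.mono fun ω hω => by simp only [← hω])
  rw [e4]
  refine (integral_sq_condExp_le P hY1m.comap_le _ hHP2).trans_eq ?_
  rw [hP, integral_fun_fst (fun ω => H ω ^ 2)]
  simp

/-- **Properties of the scalar state-evolution map.** For square-integrable `Θ` and a standard
Gaussian `G` independent of `Θ`, the map `F(γ) = E[(E[Θ | √γΘ + G])²]` is (a) non-decreasing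
and (b) continuous on `[0,∞)`; and (c) for any `λ > 0` and starting point `γ₀ ≥ 0`, the
iterates `γ_{k+1} = λ² F(γ_k)` form a monotone sequence converging to a fixed point
`γ_∞ ∈ [0, λ² E[Θ²]]` with `γ_∞ = λ² F(γ_∞)`. -/
theorem seF_monotone_continuous_and_fixed_point
    {Ω : Type*} [MeasurableSpace Ω] (ν : Measure Ω) [IsProbabilityMeasure ν]
    (Θ : Ω → ℝ) (hΘm : Measurable Θ)
    (hΘsq : MeasureTheory.Integrable (fun ω => Θ ω ^ 2) ν)
    (W : Ω → ℝ) (hWm : Measurable W) (hW : ν.map W = gaussianReal 0 1)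
    (hindep : IndepFun Θ W ν) :
    MonotoneOn (seF ν Θ W) (Set.Ici 0) ∧
    ContinuousOn (seF ν Θ W) (Set.Ici 0) ∧
    (∀ lam : ℝ, 0 < lam → ∀ γ0 : ℝ, 0 ≤ γ0 → ∀ γseq : ℕ → ℝ,
      γseq 0 = γ0 → (∀ k, γseq (k + 1) = lam ^ 2 * seF ν Θ W (γseq k)) →
      (Monotone γseq ∨ Antitone γseq) ∧
      ∃ γinf ∈ Set.Icc (0 : ℝ) (lam ^ 2 * ∫ ω, Θ ω ^ 2 ∂ν),
        Tendsto γseq atTop (nhds γinf) ∧ γinf = lam ^ 2 * seF ν Θ W γinf) := by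
  have hΘ2 : MemLp Θ 2 ν := (memLp_two_iff_integrable_sq hΘm.aestronglyMeasurable).2 hΘsq
  have hΘi : Integrable Θ ν := hΘ2.integrable one_le_two
  have hmono := seF_mono ν Θ hΘm hΘ2 W hWm hW hindep
  have hprob : IsProbabilityMeasure (ν.map Θ) :=
    Measure.isProbabilityMeasure_map hΘm.aemeasurable
  have h1 : Integrable (fun θ : ℝ => θ ^ 1) (ν.map Θ) := by
    simp only [pow_one]
    rw [integrable_map_measure (by fun_prop) hΘm.aemeasurable]; exact hΘi
  have h2 : Integrable (fun θ : ℝ => θ ^ 2) (ν.map Θ) := by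
    rw [integrable_map_measure (by fun_prop) hΘm.aemeasurable]; exact hΘsq
  have hcont : Continuous (seF ν Θ W) := by
    have : seF ν Θ W = fun γ => gF (ν.map Θ) (Real.sqrt γ) :=
      funext fun γ => seF_eq ν Θ hΘm hΘi W hWm hW hindep γ
    rw [this]
    exact (continuous_gF h1 h2).comp Real.continuous_sqrt
  have hnn : ∀ γ, 0 ≤ seF ν Θ W γ := fun γ => integral_nonneg fun ω => sq_nonneg _
  have hub : ∀ γ, seF ν Θ W γ ≤ ∫ ω, Θ ω ^ 2 ∂ν := fun γ =>
    integral_sq_condExp_le ν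
      (by fun_prop : Measurable fun ω' => Real.sqrt γ * Θ ω' + W ω').comap_le Θ hΘ2
  refine ⟨hmono, hcont.continuousOn, ?_⟩
  intro lam hlam γ0 hγ0 γseq hs0 hs
  have hl : 0 ≤ lam ^ 2 := sq_nonneg _
  have snn : ∀ k, 0 ≤ γseq k := by
    intro k
    cases k with
    | zero => rw [hs0]; exact hγ0
    | succ k => rw [hs]; exact mul_nonneg hl (hnn _)
  have sub : ∀ k, γseq (k + 1) ≤ lam ^ 2 * ∫ ω, Θ ω ^ 2 ∂ν := fun k => by
    rw [hs]; exact mul_le_mul_of_nonneg_left (hub _) hl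
  have smono : ∀ i j, γseq i ≤ γseq j → γseq (i + 1) ≤ γseq (j + 1) := fun i j hij => by
    rw [hs, hs]
    exact mul_le_mul_of_nonneg_left (hmono (snn i) (snn j) hij) hl
  have hMA : Monotone γseq ∨ Antitone γseq := by
    rcases le_total (γseq 0) (γseq 1) with h | h
    · left
      refine monotone_nat_of_le_succ fun n => ?_
      induction n with
      | zero => exact h
      | succ n ih => exact smono _ _ ih
    · right
      refine antitone_nat_of_succ_le fun n => ?_
      induction n with
      | zero => exact h
      | succ n ih => exact smono _ _ ih
  refine ⟨hMA, ?_⟩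
  obtain ⟨L, hL⟩ : ∃ L, Tendsto γseq atTop (nhds L) := by
    rcases hMA with h | h
    · refine ⟨_, tendsto_atTop_ciSup h ⟨lam ^ 2 * ∫ ω, Θ ω ^ 2 ∂ν, ?_⟩⟩
      rintro _ ⟨k, rfl⟩
      exact (h (Nat.le_succ k)).trans (sub k)
    · refine ⟨_, tendsto_atTop_ciInf h ⟨0, ?_⟩⟩
      rintro _ ⟨k, rfl⟩
      exact snn k
  have hL1 := (tendsto_add_atTop_iff_nat 1).2 hL
  refine ⟨L, ⟨ge_of_tendsto' hL snn, le_of_tendsto' hL1 sub⟩, hL, ?_⟩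
  refine tendsto_nhds_unique hL1 ?_
  simp only [hs]
  exact ((hcont.tendsto L).comp hL).const_mul _

end
end

section
/- Let G = (V, E) be a finite tree with |V| = n, let 𝒳 be a finite nonempty set, and for each edge (i,j) ∈ E let ψ_{ij} : 𝒳 × 𝒳 → (0, ∞) be strictly positive, with ψ_{ij}(x,y) = ψ_{ji}(y,x). Let μ be the probability distribution on 𝒳^V given by μ(x) = (1/Z) Π_{(i,j)∈E} ψ_{ij}(x_i, x_j), and for each edge (i,j) let μ_{(i,j)} be the analogous distribution with the factor ψ_{ij} removed. Initialize, for each directed edge i→j, an arbitrary probability distribution ν^{(0)}_{i→j} on 𝒳, and define belief propagation updates ν^{(t+1)}_{i→j}(x_i) = (1/Z_{i→j}) Π_{k ∈ ∂i \ {j}} Σ_{x_k ∈ 𝒳} ψ_{ik}(x_i, x_k) ν^{(t)}_{k→i}(x_k), where ∂i is the set of neighbors of i and Z_{i→j} normalizes the result to a probability distribution. Then for every t ≥ n and every directed edge i→j, ν^{(t)}_{i→j}(x) = μ_{(i,j)}(x_i = x) for all x ∈ 𝒳, i.e., belief propagation computes the exact single-site marginals of the edge-removed measures on trees. -/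
noncomputable section

open Finset in
theorem bp_indep {V X : Type*} [Fintype V] [DecidableEq V] [Fintype X] (A : Finset V)
    (f g : (V → X) → ℝ)
    (hf : ∀ c c' : V → X, (∀ v ∈ A, c v = c' v) → f c = f c')
    (hg : ∀ c c' : V → X, (∀ v, v ∉ A → c v = c' v) → g c = g c') :
    (∑ c, f c * g c) * (Fintype.card (V → X) : ℝ) = (∑ c, f c) * ∑ c, g c := by
  classical
  let sw : (V → X) × (V → X) → (V → X) × (V → X) := fun p =>
    (fun v => if v ∈ A then p.1 v else p.2 v, fun v => if v ∈ A then p.2 v else p.1 v)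
  have hsw : Function.Involutive sw := by
    rintro ⟨a, b⟩
    ext v <;> by_cases h : v ∈ A <;> simp [sw, h]
  rw [Finset.sum_mul_sum, ← Finset.sum_product', ← Finset.univ_product_univ.symm,
    ← Equiv.sum_comp (Function.Involutive.toPerm sw hsw)]
  have : ∀ p : (V → X) × (V → X), f ((Function.Involutive.toPerm sw hsw) p).1 *
      g ((Function.Involutive.toPerm sw hsw) p).2 = f p.1 * g p.1 := by
    intro p
    rw [hf _ p.1, hg _ p.1]
    · intro v hv; simp [sw, hv]
    · intro v hv; simp [sw, hv]
  rw [Finset.sum_congr rfl (fun p _ => this p), ← Finset.univ_product_univ, Finset.sum_product]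
  rw [Finset.sum_mul]
  refine Finset.sum_congr rfl (fun c _ => ?_)
  simp [mul_comm]

theorem bp_indep_prod {V X ι : Type*} [Fintype V] [DecidableEq V] [Fintype X] [Nonempty X]
    [DecidableEq ι] (K : Finset ι) (A : ι → Finset V) (B : Finset V)
    (g : (V → X) → ℝ) (f : ι → (V → X) → ℝ)
    (hB : ∀ k ∈ K, Disjoint B (A k))
    (hA : ∀ k ∈ K, ∀ l ∈ K, k ≠ l → Disjoint (A k) (A l))
    (hg : ∀ c c' : V → X, (∀ v ∈ B, c v = c' v) → g c = g c')
    (hf : ∀ k ∈ K, ∀ c c' : V → X, (∀ v ∈ A k, c v = c' v) → f k c = f k c') :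
    (∑ c, g c * ∏ k ∈ K, f k c) =
      (∑ c, g c) * ∏ k ∈ K, ((∑ c, f k c) / (Fintype.card (V → X) : ℝ)) := by
  classical
  have hC : (Fintype.card (V → X) : ℝ) ≠ 0 := by
    exact_mod_cast Fintype.card_ne_zero
  induction K using Finset.induction_on with
  | empty => simp
  | insert a s ha ih =>
    have ih' := ih (fun k hk => hB k (Finset.mem_insert_of_mem hk))
      (fun k hk l hl => hA k (Finset.mem_insert_of_mem hk) l (Finset.mem_insert_of_mem hl))
      (fun k hk => hf k (Finset.mem_insert_of_mem hk))
    have h1 := bp_indep (A a) (f a) (fun c => g c * ∏ k ∈ s, f k c)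
      (hf a (Finset.mem_insert_self _ _)) (by
        intro c c' h
        have e1 : g c = g c' := hg _ _ (fun v hv => h v
          (Finset.disjoint_left.mp (hB a (Finset.mem_insert_self _ _)) hv))
        have e2 : ∏ k ∈ s, f k c = ∏ k ∈ s, f k c' := Finset.prod_congr rfl (fun k hk =>
          hf k (Finset.mem_insert_of_mem hk) _ _ (fun v hv => h v
            (Finset.disjoint_left.mp (hA k (Finset.mem_insert_of_mem hk) a
              (Finset.mem_insert_self _ _) (by rintro rfl; exact ha hk)) hv)))
        simp only [e1, e2])
    rw [ih'] at h1
    rw [Finset.prod_insert ha]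
    simp_rw [Finset.prod_insert ha]
    have : ∀ c, g c * (f a c * ∏ k ∈ s, f k c) = f a c * (g c * ∏ k ∈ s, f k c) := by
      intro c; ring
    simp_rw [this]
    rw [eq_comm, ← mul_left_inj' hC, h1]
    field_simp

section graph
variable {V : Type*} {G : SimpleGraph V}

theorem bp_unique (hT : G.IsTree) {i k l v : V} (hk : G.Adj i k) (hl : G.Adj i l)
    (h1 : G.dist k v < G.dist i v) (h2 : G.dist l v < G.dist i v) : k = l := by
  have key : ∀ m, G.Adj i m → G.dist m v < G.dist i v →
      ∃ p : G.Walk i v, p.IsPath ∧ p.snd = m := by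
    intro m hm h
    obtain ⟨p, hp⟩ := hT.connected.exists_walk_length_eq_dist m v
    refine ⟨SimpleGraph.Walk.cons hm p, SimpleGraph.Walk.isPath_of_length_eq_dist _ ?_, by simp⟩
    have := SimpleGraph.dist_le (SimpleGraph.Walk.cons hm p)
    simp only [SimpleGraph.Walk.length_cons] at this ⊢
    omega
  obtain ⟨p, hp, rfl⟩ := key k hk h1
  obtain ⟨q, hq, rfl⟩ := key l hl h2
  rw [(hT.existsUnique_path i v).unique hp hq]

theorem bp_exists (hT : G.IsTree) {i v : V} (h : v ≠ i) :
    ∃ k, G.Adj i k ∧ G.dist k v < G.dist i v := by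
  obtain ⟨p, hp⟩ := hT.connected.exists_walk_length_eq_dist i v
  cases p with
  | nil => exact absurd rfl h
  | cons hm p =>
    refine ⟨_, hm, ?_⟩
    have := SimpleGraph.dist_le p
    simp only [SimpleGraph.Walk.length_cons] at hp
    omega

theorem bp_dichotomy (hT : G.IsTree) {i j : V} (h : G.Adj i j) (v : V) :
    G.dist i v < G.dist j v ∨ G.dist j v < G.dist i v := by
  have := hT.dist_ne_of_adj v h
  rw [SimpleGraph.dist_comm, SimpleGraph.dist_comm (v := j)] at this
  omega

theorem bp_edge (hT : G.IsTree) {i u v : V} (h : G.Adj u v) (hu : u ≠ i) (hv : v ≠ i) :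
    ∃ k, G.Adj i k ∧ G.dist k u < G.dist i u ∧ G.dist k v < G.dist i v := by
  have key : ∀ u v, G.Adj u v → v ≠ i → G.dist i v < G.dist i u →
    ∃ k, G.Adj i k ∧ G.dist k u < G.dist i u ∧ G.dist k v < G.dist i v := by
    intro u v h hv hlt
    obtain ⟨k, hk, hd⟩ := bp_exists hT hv
    refine ⟨k, hk, ?_, hd⟩
    have := hT.connected.dist_triangle (u := k) (v := v) (w := u)
    have h1 := SimpleGraph.dist_eq_one_iff_adj.mpr h.symm
    omega
  rcases bp_dichotomy hT h i with h1 | h1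
  · rw [SimpleGraph.dist_comm, SimpleGraph.dist_comm (u := v)] at h1
    obtain ⟨k, a, b, c⟩ := key v u h.symm hu h1
    exact ⟨k, a, c, b⟩
  · rw [SimpleGraph.dist_comm, SimpleGraph.dist_comm (u := u)] at h1
    exact key u v h hv h1

theorem bp_side (hT : G.IsTree) {i j u v : V} (hij : G.Adj i j) (h : G.Adj u v)
    (hne : ¬ (u = i ∧ v = j)) (hu : G.dist i u < G.dist j u) : G.dist i v < G.dist j v := by
  rcases bp_dichotomy hT hij v with h1 | h1
  · exact h1
  exfalso
  by_cases hvi : v = i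
  · subst hvi; simp at h1
  by_cases hui : u = i
  · subst hui
    exact hne ⟨rfl, (bp_unique hT h hij (by simp [SimpleGraph.dist_eq_one_iff_adj.mpr h]) h1)⟩
  obtain ⟨k, hk, a, b⟩ := bp_edge hT h hui hvi
  have := bp_unique hT hk hij b h1
  subst this
  omega

end graph

/-- Vertices on the `i` side of the edge `ij`. -/
def bpS {n : ℕ} (G : SimpleGraph (Fin n)) (i j : Fin n) : Finset (Fin n) :=
  Finset.univ.filter (fun v => G.dist i v < G.dist j v)

/-- Edges on the `i` side of the edge `ij`. -/
def bpE {n : ℕ} (G : SimpleGraph (Fin n)) [DecidableRel G.Adj] (i j : Fin n) :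
    Finset (Fin n × Fin n) :=
  Finset.univ.filter (fun e => e.1 < e.2 ∧ G.Adj e.1 e.2 ∧ e.1 ∈ bpS G i j ∧ e.2 ∈ bpS G i j)

/-- Weight of the `i` side. -/
def bpW {n : ℕ} (G : SimpleGraph (Fin n)) [DecidableRel G.Adj] {X : Type*}
    (ψ : Fin n → Fin n → X → X → ℝ) (i j : Fin n) (c : Fin n → X) : ℝ :=
  ∏ e ∈ bpE G i j, ψ e.1 e.2 (c e.1) (c e.2)

/-- Unnormalized marginal. -/
def bpA {n : ℕ} (G : SimpleGraph (Fin n)) [DecidableRel G.Adj] {X : Type*} [Fintype X]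
    [DecidableEq X] (ψ : Fin n → Fin n → X → X → ℝ) (i j : Fin n) (x : X) : ℝ :=
  ∑ c : Fin n → X, if c i = x then bpW G ψ i j c else 0

/-- Ordered edge. -/
def bpo {n : ℕ} (i k : Fin n) : Fin n × Fin n := if i < k then (i, k) else (k, i)

section main
variable {n : ℕ} {G : SimpleGraph (Fin n)} [DecidableRel G.Adj]

theorem bpS_mem {i j v : Fin n} : v ∈ bpS G i j ↔ G.dist i v < G.dist j v := by
  simp [bpS]

theorem bpE_mem {i j : Fin n} {e : Fin n × Fin n} : e ∈ bpE G i j ↔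
    e.1 < e.2 ∧ G.Adj e.1 e.2 ∧ e.1 ∈ bpS G i j ∧ e.2 ∈ bpS G i j := by
  simp [bpE]

theorem bpS_self {i j : Fin n} (h : G.Adj i j) : i ∈ bpS G i j := by
  rw [bpS_mem]; simp [SimpleGraph.dist_eq_one_iff_adj.mpr h.symm]

theorem bpS_notself (i j : Fin n) : j ∉ bpS G i j := by
  rw [bpS_mem]; simp

theorem bpS_disj (hT : G.IsTree) {i k l : Fin n} (hk : G.Adj i k) (hl : G.Adj i l) (hkl : k ≠ l) :
    Disjoint (bpS G k i) (bpS G l i) := by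
  rw [Finset.disjoint_left]
  intro v hv hv'
  rw [bpS_mem] at hv hv'
  exact hkl (bp_unique hT hk hl hv hv')

theorem bpS_sub (hT : G.IsTree) {i j k : Fin n} (hk : G.Adj i k) (hj : G.Adj i j) (hkj : k ≠ j) :
    bpS G k i ⊆ bpS G i j := by
  intro v hv
  rw [bpS_mem] at *
  rcases bp_dichotomy hT hj v with h | h
  · exact h
  · exact absurd (bp_unique hT hk hj hv h) hkj

theorem bpS_card (hT : G.IsTree) {i j k : Fin n} (hk : G.Adj i k) (hj : G.Adj i j) (hkj : k ≠ j) :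
    (bpS G k i).card < (bpS G i j).card := by
  apply Finset.card_lt_card
  refine (Finset.ssubset_iff_of_subset (bpS_sub hT hk hj hkj)).mpr ⟨i, bpS_self hj, bpS_notself _ _⟩

theorem bpE_eq (hT : G.IsTree) {i j : Fin n} (hj : G.Adj i j) :
    bpE G i j = ((G.neighborFinset i).erase j).biUnion
      (fun k => insert (bpo i k) (bpE G k i)) := by
  ext ⟨u, v⟩
  simp only [Finset.mem_biUnion, Finset.mem_erase, SimpleGraph.mem_neighborFinset,
    Finset.mem_insert, bpE_mem]
  constructor
  · rintro ⟨h1, h2, h3, h4⟩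
    by_cases hu : u = i
    · subst hu
      refine ⟨v, ⟨?_, h2⟩, Or.inl ?_⟩
      · rintro rfl; exact bpS_notself _ _ h4
      · simp [bpo, h1]
    by_cases hv : v = i
    · subst hv
      refine ⟨u, ⟨?_, h2.symm⟩, Or.inl ?_⟩
      · rintro rfl; exact bpS_notself _ _ h3
      · simp [bpo, h1.not_gt]
    obtain ⟨k, hk, a, b⟩ := bp_edge hT h2 hu hv
    refine ⟨k, ⟨?_, hk⟩, Or.inr ⟨h1, h2, bpS_mem.mpr a, bpS_mem.mpr b⟩⟩
    rintro rfl
    rw [bpS_mem] at h3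
    omega
  · rintro ⟨k, ⟨hkj, hk⟩, h | ⟨h1, h2, h3, h4⟩⟩
    · have hki := bpS_sub hT hk hj hkj (bpS_self hk.symm)
      have hi := bpS_self hj
      unfold bpo at h
      split_ifs at h with hlt
      · obtain ⟨rfl, rfl⟩ := Prod.mk.inj h
        exact ⟨hlt, hk, hi, hki⟩
      · obtain ⟨rfl, rfl⟩ := Prod.mk.inj h
        exact ⟨lt_of_le_of_ne (not_lt.mp hlt) hk.ne.symm, hk.symm, hki, hi⟩
    · exact ⟨h1, h2, bpS_sub hT hk hj hkj h3, bpS_sub hT hk hj hkj h4⟩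

theorem bpo_notmem (i k l : Fin n) : bpo i k ∉ bpE G l i := by
  rw [bpE_mem]
  have := bpS_notself (G := G) l i
  unfold bpo
  split_ifs <;> simp [this]

theorem bpW_eq (hT : G.IsTree) {X : Type*} (ψ : Fin n → Fin n → X → X → ℝ)
    (hsym : ∀ i j x y, ψ i j x y = ψ j i y x) {i j : Fin n} (hj : G.Adj i j) (c : Fin n → X) :
    bpW G ψ i j c = ∏ k ∈ (G.neighborFinset i).erase j,
      (ψ i k (c i) (c k) * bpW G ψ k i c) := by
  unfold bpW
  rw [bpE_eq hT hj, Finset.prod_biUnion]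
  · refine Finset.prod_congr rfl (fun k hk => ?_)
    rw [Finset.prod_insert (bpo_notmem i k k)]
    congr 1
    unfold bpo
    split_ifs
    · rfl
    · exact hsym _ _ _ _
  · intro k hk l hl hkl
    simp only [Finset.coe_erase, Set.mem_sdiff, Finset.mem_coe, SimpleGraph.mem_neighborFinset]
      at hk hl
    have hd := Finset.disjoint_left.mp (bpS_disj hT hk.1 hl.1 hkl)
    simp only [Function.onFun]
    rw [Finset.disjoint_left]
    intro e he he'
    rw [Finset.mem_insert] at he he'
    rcases he with rfl | he
    · rcases he' with he' | he'
      · apply hkl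
        unfold bpo at he'
        have := hk.1.ne
        have := hl.1.ne
        split_ifs at he' <;> simp_all
      · exact bpo_notmem _ _ _ he'
    · rcases he' with rfl | he'
      · exact bpo_notmem _ _ _ he
      · exact hd (bpE_mem.mp he).2.2.1 (bpE_mem.mp he').2.2.1

theorem bpW_dep {X : Type*} (ψ : Fin n → Fin n → X → X → ℝ) (i j : Fin n) (c c' : Fin n → X)
    (h : ∀ v ∈ bpS G i j, c v = c' v) : bpW G ψ i j c = bpW G ψ i j c' := by
  unfold bpW
  refine Finset.prod_congr rfl (fun e he => ?_)
  rw [bpE_mem] at he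
  rw [h _ he.2.2.1, h _ he.2.2.2]

theorem bpW_pos {X : Type*} (ψ : Fin n → Fin n → X → X → ℝ)
    (hpos : ∀ i j, G.Adj i j → ∀ x y, 0 < ψ i j x y) (i j : Fin n) (c : Fin n → X) :
    0 < bpW G ψ i j c :=
  Finset.prod_pos (fun e he => hpos _ _ (bpE_mem.mp he).2.1 _ _)

theorem bpA_sum {X : Type*} [Fintype X] [DecidableEq X] (ψ : Fin n → Fin n → X → X → ℝ)
    (i j : Fin n) (h : X → ℝ) :
    ∑ x, h x * bpA G ψ i j x = ∑ c : Fin n → X, h (c i) * bpW G ψ i j c := by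
  unfold bpA
  simp_rw [Finset.mul_sum]
  rw [Finset.sum_comm]
  refine Finset.sum_congr rfl (fun c _ => ?_)
  simp

theorem bpA_tot_pos {X : Type*} [Fintype X] [DecidableEq X] [Nonempty X]
    (ψ : Fin n → Fin n → X → X → ℝ)
    (hpos : ∀ i j, G.Adj i j → ∀ x y, 0 < ψ i j x y) (i j : Fin n) :
    0 < ∑ x, bpA G ψ i j x := by
  have := bpA_sum (G := G) ψ i j (fun _ => 1)
  simp only [one_mul] at this
  rw [this]
  exact Finset.sum_pos (fun c _ => bpW_pos ψ hpos _ _ _) Finset.univ_nonempty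

theorem bp_cnt {X : Type*} [Fintype X] [DecidableEq X] (i : Fin n) (x x' : X) :
    (∑ c : Fin n → X, if c i = x then (1:ℝ) else 0) =
      ∑ c : Fin n → X, if c i = x' then (1:ℝ) else 0 := by
  rw [← Equiv.sum_comp (Equiv.arrowCongr (Equiv.refl (Fin n)) (Equiv.swap x x'))]
  refine Finset.sum_congr rfl (fun c _ => ?_)
  simp only [Equiv.arrowCongr_apply, Equiv.refl_symm, Equiv.coe_refl, Function.comp_id,
    Function.comp_apply]
  congr 1
  rw [Equiv.swap_apply_eq_iff]
  simp

theorem bpA_rec (hT : G.IsTree) {X : Type*} [Fintype X] [DecidableEq X] [Nonempty X]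
    (ψ : Fin n → Fin n → X → X → ℝ)
    (hsym : ∀ i j x y, ψ i j x y = ψ j i y x) {i j : Fin n} (hj : G.Adj i j) (x : X) :
    bpA G ψ i j x = (∑ c : Fin n → X, if c i = x then (1:ℝ) else 0) *
      ∏ k ∈ (G.neighborFinset i).erase j,
        ((∑ y, ψ i k x y * bpA G ψ k i y) / (Fintype.card (Fin n → X) : ℝ)) := by
  have h1 : bpA G ψ i j x = ∑ c : Fin n → X, (if c i = x then (1:ℝ) else 0) *
      ∏ k ∈ (G.neighborFinset i).erase j, (ψ i k x (c k) * bpW G ψ k i c) := by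
    unfold bpA
    refine Finset.sum_congr rfl (fun c _ => ?_)
    split_ifs with h
    · rw [bpW_eq hT ψ hsym hj, one_mul, h]
    · simp
  rw [h1, bp_indep_prod _ (fun k => bpS G k i) {i}]
  · simp_rw [bpA_sum]
  · intro k _
    rw [Finset.disjoint_singleton_left]
    exact bpS_notself _ _
  · intro k hk l hl hkl
    simp only [Finset.mem_erase, SimpleGraph.mem_neighborFinset] at hk hl
    exact bpS_disj hT hk.2 hl.2 hkl
  · intro c c' h
    rw [h i (by simp)]
  · intro k hk c c' h
    simp only [Finset.mem_erase, SimpleGraph.mem_neighborFinset] at hk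
    rw [bpW_dep ψ k i c c' h, h k (bpS_self hk.2.symm)]

theorem bp_ratio {X : Type*} [Fintype X] (a b : X → ℝ) (κ : ℝ) (hκ : κ ≠ 0)
    (h : ∀ x, a x = κ * b x) (x : X) : b x / ∑ x, b x = a x / ∑ x, a x := by
  simp_rw [h, ← Finset.mul_sum]
  rw [mul_div_mul_left _ _ hκ]

theorem bp_main (hT : G.IsTree) {X : Type*} [Fintype X] [DecidableEq X] [Nonempty X]
    (ψ : Fin n → Fin n → X → X → ℝ)
    (hpos : ∀ i j, G.Adj i j → ∀ x y, 0 < ψ i j x y)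
    (hsym : ∀ i j x y, ψ i j x y = ψ j i y x)
    (ν : ℕ → Fin n → Fin n → X → ℝ)
    (hupd : ∀ t i j, G.Adj i j → ∀ x : X,
      ν (t + 1) i j x =
        (∏ k ∈ (G.neighborFinset i).erase j, ∑ y, ψ i k x y * ν t k i y) /
        (∑ x', ∏ k ∈ (G.neighborFinset i).erase j, ∑ y, ψ i k x' y * ν t k i y)) :
    ∀ t i j, G.Adj i j → (bpS G i j).card ≤ t → ∀ x,
      ν t i j x = bpA G ψ i j x / ∑ x, bpA G ψ i j x := by
  intro t
  induction t with
  | zero =>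
    intro i j hij h
    have := Finset.card_pos.mpr ⟨i, bpS_self hij⟩
    omega
  | succ t ih =>
    intro i j hij h x
    rw [hupd t i j hij x]
    have hC : (Fintype.card (Fin n → X) : ℝ) ≠ 0 := by
      exact_mod_cast Fintype.card_ne_zero
    refine bp_ratio (bpA G ψ i j) (fun x =>
      ∏ k ∈ (G.neighborFinset i).erase j, ∑ y, ψ i k x y * ν t k i y) ((∑ c : Fin n → X, if c i = x then (1:ℝ) else 0) *
      ∏ k ∈ (G.neighborFinset i).erase j,
        ((∑ x, bpA G ψ k i x) / (Fintype.card (Fin n → X) : ℝ))) ?_ ?_ x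
    · refine mul_ne_zero ?_ (Finset.prod_ne_zero_iff.mpr (fun k _ =>
        div_ne_zero (bpA_tot_pos ψ hpos _ _).ne' hC))
      refine (Finset.sum_pos' (fun c _ => by positivity)
        ⟨fun _ => x, Finset.mem_univ _, by simp⟩).ne'
    · intro x'
      rw [bpA_rec hT ψ hsym hij, bp_cnt i x' x, mul_assoc, ← Finset.prod_mul_distrib]
      congr 1
      refine Finset.prod_congr rfl (fun k hk => ?_)
      simp only [Finset.mem_erase, SimpleGraph.mem_neighborFinset] at hk
      have hlt := bpS_card hT hk.2 hij hk.1
      rw [div_mul_eq_mul_div, Finset.mul_sum]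
      congr 1
      refine Finset.sum_congr rfl (fun y _ => ?_)
      rw [ih k i hk.2.symm (by omega) y]
      have := (bpA_tot_pos ψ hpos k i).ne'
      field_simp

theorem bpE_full (hT : G.IsTree) {i j : Fin n} (hij : G.Adj i j) :
    Finset.univ.filter (fun e : Fin n × Fin n =>
            e.1 < e.2 ∧ G.Adj e.1 e.2 ∧ ¬(e.1 = i ∧ e.2 = j) ∧ ¬(e.1 = j ∧ e.2 = i)) =
      bpE G i j ∪ bpE G j i := by
  ext ⟨u, v⟩
  simp only [Finset.mem_filter, Finset.mem_univ, true_and, Finset.mem_union, bpE_mem]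
  constructor
  · rintro ⟨h1, h2, h3, h4⟩
    rcases bp_dichotomy hT hij u with h | h
    · exact Or.inl ⟨h1, h2, bpS_mem.mpr h, bpS_mem.mpr (bp_side hT hij h2 h3 h)⟩
    · exact Or.inr ⟨h1, h2, bpS_mem.mpr h, bpS_mem.mpr (bp_side hT hij.symm h2 h4 h)⟩
  · rintro (⟨h1, h2, h3, h4⟩ | ⟨h1, h2, h3, h4⟩)
    · refine ⟨h1, h2, ?_, ?_⟩
      · rintro ⟨rfl, rfl⟩; exact bpS_notself _ _ h4
      · rintro ⟨rfl, rfl⟩; exact bpS_notself _ _ h3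
    · refine ⟨h1, h2, ?_, ?_⟩
      · rintro ⟨rfl, rfl⟩; exact bpS_notself _ _ h3
      · rintro ⟨rfl, rfl⟩; exact bpS_notself _ _ h4

theorem bpS_disj2 (i j : Fin n) : Disjoint (bpS G i j) (bpS G j i) := by
  rw [Finset.disjoint_left]
  intro v h h'
  rw [bpS_mem] at h h'
  omega

theorem bpW_full (hT : G.IsTree) {i j : Fin n} (hij : G.Adj i j) {X : Type*}
    (ψ : Fin n → Fin n → X → X → ℝ) (c : Fin n → X) :
    ∏ e ∈ Finset.univ.filter (fun e : Fin n × Fin n =>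
            e.1 < e.2 ∧ G.Adj e.1 e.2 ∧ ¬(e.1 = i ∧ e.2 = j) ∧ ¬(e.1 = j ∧ e.2 = i)),
            ψ e.1 e.2 (c e.1) (c e.2) = bpW G ψ i j c * bpW G ψ j i c := by
  rw [bpE_full hT hij, Finset.prod_union]
  · rfl
  · rw [Finset.disjoint_left]
    intro e he he'
    exact Finset.disjoint_left.mp (bpS_disj2 i j) (bpE_mem.mp he).2.2.1 (bpE_mem.mp he').2.2.1

theorem bp_final (hT : G.IsTree) {i j : Fin n} (hij : G.Adj i j) {X : Type*} [Fintype X]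
    [DecidableEq X] [Nonempty X]
    (ψ : Fin n → Fin n → X → X → ℝ)
    (hpos : ∀ i j, G.Adj i j → ∀ x y, 0 < ψ i j x y) (x : X) :
    bpA G ψ i j x / ∑ x, bpA G ψ i j x =
      (∑ c ∈ Finset.univ.filter (fun c : Fin n → X => c i = x), bpW G ψ i j c * bpW G ψ j i c) /
      ∑ c : Fin n → X, bpW G ψ i j c * bpW G ψ j i c := by
  have hC : (Fintype.card (Fin n → X) : ℝ) ≠ 0 := by
    exact_mod_cast Fintype.card_ne_zero
  have hB : (∑ c : Fin n → X, bpW G ψ j i c) ≠ 0 :=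
    (Finset.sum_pos (fun c _ => bpW_pos ψ hpos _ _ _) Finset.univ_nonempty).ne'
  have htot : ∑ c : Fin n → X, bpW G ψ i j c * bpW G ψ j i c =
      ∑ x, ∑ c ∈ Finset.univ.filter (fun c : Fin n → X => c i = x),
        bpW G ψ i j c * bpW G ψ j i c := by
    rw [Finset.sum_fiberwise]
  rw [htot]
  refine bp_ratio (fun x => ∑ c ∈ Finset.univ.filter (fun c : Fin n → X => c i = x),
        bpW G ψ i j c * bpW G ψ j i c) (bpA G ψ i j)
        ((∑ c : Fin n → X, bpW G ψ j i c) / (Fintype.card (Fin n → X) : ℝ))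
        (div_ne_zero hB hC) ?_ x
  intro x
  have := bp_indep (bpS G i j) (fun c => if c i = x then bpW G ψ i j c else 0)
    (fun c => bpW G ψ j i c) (by
      intro c c' h
      rw [h i (bpS_self hij), bpW_dep ψ i j c c' h])
    (by
      intro c c' h
      exact bpW_dep ψ j i c c' (fun v hv => h v (Finset.disjoint_right.mp (bpS_disj2 i j) hv)))
  simp only [Finset.sum_filter]
  rw [div_mul_eq_mul_div, eq_div_iff hC, mul_comm (∑ c, bpW G ψ j i c)]
  simpa only [ite_mul, zero_mul, bpA] using this

end main


/-- **Belief propagation is exact on trees.** Let `G` be a finite tree on `n` vertices with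
strictly positive symmetric pairwise potentials `ψ_{ij}`, and let `μ_{(i,j)}` be the Gibbs
measure with the factor of edge `(i,j)` removed.  Then, starting from arbitrary probability
distributions as initial messages, after `t ≥ n` rounds of the belief propagation (sum-product)
update
`ν^{(t+1)}_{i→j}(x) ∝ Π_{k ∈ ∂i∖{j}} Σ_y ψ_{ik}(x,y) ν^{(t)}_{k→i}(y)`,
each message equals the exact single-site marginal: `ν^{(t)}_{i→j}(x) = μ_{(i,j)}(x_i = x)`. -/
theorem belief_propagation_exact_on_trees
    (n : ℕ) (G : SimpleGraph (Fin n)) [DecidableRel G.Adj] (hT : G.IsTree)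
    (X : Type*) [Fintype X] [Nonempty X] [DecidableEq X]
    (ψ : Fin n → Fin n → X → X → ℝ)
    (hpos : ∀ i j, G.Adj i j → ∀ x y, 0 < ψ i j x y)
    (hsym : ∀ i j x y, ψ i j x y = ψ j i y x)
    (ν : ℕ → Fin n → Fin n → X → ℝ)
    (hinit : ∀ i j, G.Adj i j → (∀ x, 0 ≤ ν 0 i j x) ∧ ∑ x, ν 0 i j x = 1)
    (hupd : ∀ t i j, G.Adj i j → ∀ x : X,
      ν (t + 1) i j x =
        (∏ k ∈ (G.neighborFinset i).erase j, ∑ y, ψ i k x y * ν t k i y) /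
        (∑ x', ∏ k ∈ (G.neighborFinset i).erase j, ∑ y, ψ i k x' y * ν t k i y)) :
    ∀ t, n ≤ t → ∀ i j, G.Adj i j → ∀ x : X,
      ν t i j x =
        (∑ c ∈ Finset.univ.filter (fun c : Fin n → X => c i = x),
          ∏ e ∈ Finset.univ.filter (fun e : Fin n × Fin n =>
            e.1 < e.2 ∧ G.Adj e.1 e.2 ∧ ¬(e.1 = i ∧ e.2 = j) ∧ ¬(e.1 = j ∧ e.2 = i)),
            ψ e.1 e.2 (c e.1) (c e.2)) /
        (∑ c : Fin n → X,
          ∏ e ∈ Finset.univ.filter (fun e : Fin n × Fin n =>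
            e.1 < e.2 ∧ G.Adj e.1 e.2 ∧ ¬(e.1 = i ∧ e.2 = j) ∧ ¬(e.1 = j ∧ e.2 = i)),
            ψ e.1 e.2 (c e.1) (c e.2)) := by
  intro t ht i j hij x
  simp_rw [bpW_full hT hij ψ]
  rw [bp_main hT ψ hpos hsym ν hupd t i j hij
    (((Finset.card_le_univ _).trans (by simp)).trans ht) x]
  exact bp_final hT hij ψ hpos x

end
end

section
/- Fix k_max ≥ 2 and ξ_2,…,ξ_{k_max} ≥ 0, and let H_n be the mixed p-spin Hamiltonian with mixture ξ, extended to [−1,1]^n by the same polynomial formula. Then for every ε > 0, lim_{n→∞} P( for every m ∈ [−1,1]^n there exists σ ∈ {−1,1}^n with H_n(σ) ≥ H_n(m) − nε ) = 1. -/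
open MeasureTheory ProbabilityTheory Filter
open scoped NNReal ENNReal

noncomputable section

/-- The point of the hypercube `{-1,1}^n` indexed by a Boolean vector. -/
def signVec {n : ℕ} (b : Fin n → Bool) : Fin n → ℝ := fun i => if b i then 1 else -1
/-- The mixed `p`-spin Hamiltonian with mixture coefficients `ξ_k`, `2 ≤ k ≤ kmax`:
`H_n(σ) = Σ_{k=2}^{kmax} √ξ_k n^{−(k−1)/2} Σ_{i_1,…,i_k} g^{(k)}_{i_1…i_k} σ_{i_1}⋯σ_{i_k}`. -/
def mixedHamiltonian (kmax n : ℕ) (ξ : ℕ → ℝ) (g : (k : ℕ) → (Fin k → Fin n) → ℝ)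
    (σ : Fin n → ℝ) : ℝ :=
  ∑ k ∈ Finset.Icc 2 kmax, Real.sqrt (ξ k) * ((n : ℝ) ^ (-(((k : ℝ) - 1) / 2))) *
    ∑ idx : Fin k → Fin n, g k idx * ∏ j, σ (idx j)


def bsg (b : Bool) : ℝ := if b then 1 else -1

def CoordAff {ι : Type*} [DecidableEq ι] (F : (ι → ℝ) → ℝ) : Prop :=
  ∀ (x : ι → ℝ) (i : ι), ∃ a b : ℝ, ∀ t : ℝ, F (Function.update x i t) = a + b * t

lemma CoordAff.sum {ι κ : Type*} [DecidableEq ι] (s : Finset κ) (F : κ → (ι → ℝ) → ℝ)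
    (h : ∀ k ∈ s, CoordAff (F k)) : CoordAff (fun x => ∑ k ∈ s, F k x) := by
  intro x i
  have h' : ∀ k, ∃ a b : ℝ, k ∈ s → ∀ t : ℝ, F k (Function.update x i t) = a + b * t := by
    intro k
    by_cases hk : k ∈ s
    · obtain ⟨a, b, hab⟩ := h k hk x i
      exact ⟨a, b, fun _ => hab⟩
    · exact ⟨0, 0, fun h => absurd h hk⟩
  choose a b hab using h'
  refine ⟨∑ k ∈ s, a k, ∑ k ∈ s, b k, fun t => ?_⟩
  rw [Finset.sum_mul, ← Finset.sum_add_distrib]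
  exact Finset.sum_congr rfl fun k hk => hab k hk t

lemma CoordAff.const_mul {ι : Type*} [DecidableEq ι] (c : ℝ) (F : (ι → ℝ) → ℝ)
    (h : CoordAff F) : CoordAff (fun x => c * F x) := by
  intro x i
  obtain ⟨a, b, hab⟩ := h x i
  exact ⟨c * a, c * b, fun t => by simp only [hab]; ring⟩

lemma CoordAff.prod {ι : Type*} [DecidableEq ι] {k : ℕ} (e : Fin k → ι)
    (he : Function.Injective e) : CoordAff (fun x => ∏ j, x (e j)) := by
  intro x i
  by_cases hi : ∃ j, e j = i
  · obtain ⟨j, rfl⟩ := hi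
    refine ⟨0, ∏ l ∈ Finset.univ.erase j, x (e l), fun t => ?_⟩
    simp only
    rw [← Finset.mul_prod_erase Finset.univ _ (Finset.mem_univ j)]
    rw [Function.update_self, zero_add, mul_comm]
    congr 1
    refine Finset.prod_congr rfl fun l hl => ?_
    rw [Function.update_of_ne]
    exact fun h => (Finset.ne_of_mem_erase hl) (he h)
  · push Not at hi
    refine ⟨∏ j, x (e j), 0, fun t => ?_⟩
    rw [zero_mul, add_zero]
    exact Finset.prod_congr rfl fun l _ => Function.update_of_ne (hi l) _ _

lemma CoordAff.round {ι : Type*} [DecidableEq ι] [Fintype ι] (F : (ι → ℝ) → ℝ)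
    (h : CoordAff F) (x : ι → ℝ) (hx : ∀ i, x i ∈ Set.Icc (-1 : ℝ) 1) :
    ∃ b : ι → Bool, F x ≤ F (fun i => bsg (b i)) := by
  have key : ∀ s : Finset ι, ∃ y : ι → ℝ, (∀ i, y i ∈ Set.Icc (-1 : ℝ) 1) ∧
      (∀ i ∈ s, ∃ b : Bool, y i = bsg b) ∧ F x ≤ F y := by
    intro s
    induction s using Finset.induction_on with
    | empty => exact ⟨x, hx, by simp, le_rfl⟩
    | insert i s his ih =>
      obtain ⟨y, hy, hs, hF⟩ := ih
      obtain ⟨a, c, hac⟩ := h y i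
      have hb : ∃ b : Bool, F y ≤ F (Function.update y i (bsg b)) := by
        have h0 := hac (y i)
        rw [Function.update_eq_self] at h0
        have h1 := (hy i).1
        have h2 := (hy i).2
        rcases le_total 0 c with hc | hc
        · refine ⟨true, ?_⟩
          rw [hac, h0]
          simp only [bsg, if_true]
          nlinarith
        · refine ⟨false, ?_⟩
          rw [hac, h0]
          simp only [bsg, Bool.false_eq_true, if_false]
          nlinarith
      obtain ⟨b, hb⟩ := hb
      refine ⟨Function.update y i (bsg b), fun j => ?_, fun j hj => ?_, hF.trans hb⟩
      · by_cases hji : j = i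
        · subst hji
          rw [Function.update_self]
          cases b <;> simp [bsg]
        · rw [Function.update_of_ne hji]; exact hy j
      · by_cases hji : j = i
        · subst hji
          exact ⟨b, by rw [Function.update_self]⟩
        · rw [Function.update_of_ne hji]
          exact hs j ((Finset.mem_insert.1 hj).resolve_left hji)
  obtain ⟨y, _, hs, hF⟩ := key Finset.univ
  choose b hb using fun i => hs i (Finset.mem_univ i)
  refine ⟨b, hF.trans (le_of_eq ?_)⟩
  congr 1
  exact funext hb

open Classical in
def nonInj (k n : ℕ) : Finset (Fin k → Fin n) :=
  Finset.univ.filter fun f => ¬ Function.Injective f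

open Classical in
lemma nonInj_card (k n : ℕ) : (nonInj k n).card ≤ k ^ 2 * n ^ (k - 1) := by
  have hsub : nonInj k n ⊆ (Finset.univ : Finset (Fin k × Fin k)).biUnion fun p =>
      Finset.univ.filter fun f : Fin k → Fin n => p.1 ≠ p.2 ∧ f p.1 = f p.2 := by
    intro f hf
    have hf := (Finset.mem_filter.1 hf).2
    unfold Function.Injective at hf
    push Not at hf
    obtain ⟨a, b, hab, hne⟩ := hf
    simp only [Finset.mem_biUnion, Finset.mem_univ, true_and, Finset.mem_filter]
    exact ⟨(a, b), hne, hab⟩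
  refine (Finset.card_le_card hsub).trans ?_
  refine (Finset.card_biUnion_le_card_mul _ _ (n ^ (k - 1)) ?_).trans ?_
  · rintro ⟨a, b⟩ _
    have hc : Fintype.card ({j : Fin k // j ≠ b} → Fin n) = n ^ (k - 1) := by
      simp
    rw [← hc, ← Finset.card_univ]
    refine Finset.card_le_card_of_injOn (fun f j => f j.1) (fun _ _ => Finset.mem_coe.2 (Finset.mem_univ _)) ?_
    intro f hf f' hf' hff
    simp only [Finset.coe_filter, Finset.mem_univ, true_and, Set.mem_ofPred_eq] at hf hf'
    funext j
    by_cases hj : j = b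
    · subst hj
      rw [← hf.2, ← hf'.2]
      exact congrFun hff ⟨a, hf.1⟩
    · exact congrFun hff ⟨j, hj⟩
  · simp [sq]

lemma nonInj_nonempty (k n : ℕ) (hk : 2 ≤ k) (hn : 0 < n) : (nonInj k n).Nonempty := by
  refine ⟨fun _ => ⟨0, hn⟩, ?_⟩
  simp only [nonInj, Finset.mem_filter, Finset.mem_univ, true_and]
  intro h
  have := @h ⟨0, by omega⟩ ⟨1, by omega⟩ rfl
  simp at this

lemma gauss_tail {Ω ι : Type*} [MeasurableSpace Ω] (μ : Measure Ω) [IsProbabilityMeasure μ]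
    (X : ι → Ω → ℝ) (hm : ∀ i, Measurable (X i)) (hi : iIndepFun X μ)
    (hg : ∀ i, μ.map (X i) = gaussianReal 0 1) (s : Finset ι) (hs : s.Nonempty)
    (c : ι → ℝ) (hc : ∀ i, c i ^ 2 = 1) (N T : ℝ) (hN : (s.card : ℝ) ≤ N) (hT : 0 ≤ T) :
    μ.real {ω | T ≤ ∑ i ∈ s, X i ω * c i} ≤ Real.exp (-T ^ 2 / (2 * N)) := by
  have hsub : ∀ i, HasSubgaussianMGF (X i) 1 μ := by
    intro i
    refine ⟨fun t => ?_, fun t => ?_⟩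
    · have := integrable_exp_mul_gaussianReal (μ := 0) (v := 1) t
      rw [← hg i] at this
      exact this.comp_measurable (hm i)
    · rw [mgf_gaussianReal (hg i)]
      simp
  have hsub' : ∀ i, HasSubgaussianMGF (fun ω => X i ω * c i) 1 μ := by
    intro i
    have := (hsub i).const_mul (c i)
    convert this using 1
    · funext ω; ring
    · apply NNReal.coe_injective; change (1:ℝ) = c i ^ 2 * 1; rw [hc i, mul_one]
  have hi' : iIndepFun (fun i ω => X i ω * c i) μ :=
    hi.comp (fun i x => x * c i) (fun i => by fun_prop)
  have h := HasSubgaussianMGF.measure_sum_ge_le_of_iIndepFun hi' (s := s) (c := fun _ => 1)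
    (fun i _ => hsub' i) hT
  refine h.trans (Real.exp_le_exp.2 ?_)
  have h0 : (0 : ℝ) < s.card := by exact_mod_cast hs.card_pos
  simp only [Finset.sum_const, nsmul_eq_mul, mul_one, NNReal.coe_natCast]
  rw [neg_div, neg_div, neg_le_neg_iff]
  gcongr

lemma bsg_sq (b : Bool) : bsg b ^ 2 = 1 := by cases b <;> simp [bsg]

/-- decoupled diagonal part -/
def diagF (k n : ℕ) (g : (Fin k → Fin n) → ℝ) (y : Fin k × Fin n → ℝ) : ℝ :=
  ∑ idx ∈ nonInj k n, g idx * ∏ j, y (j, idx j)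

lemma diagF_aff (k n : ℕ) (g : (Fin k → Fin n) → ℝ) : CoordAff (diagF k n g) := by
  refine CoordAff.sum _ _ fun idx _ => CoordAff.const_mul _ _ ?_
  exact CoordAff.prod (fun j => (j, idx j)) fun a b h => (Prod.mk.inj h).1

lemma diag_abs (k n : ℕ) (g : (Fin k → Fin n) → ℝ) (T : ℝ)
    (h : ∀ (s : Bool) (y : Fin k × Fin n → Bool),
      bsg s * diagF k n g (fun p => bsg (y p)) < T)
    (m : Fin n → ℝ) (hm : ∀ i, m i ∈ Set.Icc (-1 : ℝ) 1) :
    |∑ idx ∈ nonInj k n, g idx * ∏ j, m (idx j)| ≤ T := by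
  have key : ∀ s : Bool, bsg s * diagF k n g (fun p => m p.2) ≤ T := by
    intro s
    obtain ⟨b, hb⟩ := CoordAff.round _ (CoordAff.const_mul (bsg s) _ (diagF_aff k n g))
      (fun p => m p.2) (fun p => hm p.2)
    exact hb.trans (h s b).le
  have h1 := key true
  have h2 := key false
  simp only [bsg, if_true, Bool.false_eq_true, if_false, diagF] at h1 h2
  rw [abs_le]
  constructor <;> linarith

def injH (kmax n : ℕ) (ξ : ℕ → ℝ) (g : (k : ℕ) → (Fin k → Fin n) → ℝ)
    (σ : Fin n → ℝ) : ℝ :=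
  ∑ k ∈ Finset.Icc 2 kmax, Real.sqrt (ξ k) * ((n : ℝ) ^ (-(((k : ℝ) - 1) / 2))) *
    ∑ idx ∈ (nonInj k n)ᶜ, g k idx * ∏ j, σ (idx j)

lemma injH_aff (kmax n : ℕ) (ξ : ℕ → ℝ) (g : (k : ℕ) → (Fin k → Fin n) → ℝ) :
    CoordAff (injH kmax n ξ g) := by
  refine CoordAff.sum _ _ fun k _ => CoordAff.const_mul _ _ ?_
  refine CoordAff.sum _ _ fun idx hidx => CoordAff.const_mul _ _ ?_
  refine CoordAff.prod _ ?_
  simpa [nonInj] using hidx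

lemma H_sub (kmax n : ℕ) (hk2 : 2 ≤ kmax) (ξ : ℕ → ℝ) (g : (k : ℕ) → (Fin k → Fin n) → ℝ) (m : Fin n → ℝ)
    (D : ℝ) (T : ℕ → ℝ)
    (h : ∀ k ∈ Finset.Icc 2 kmax, |∑ idx ∈ nonInj k n, g k idx * ∏ j, m (idx j)| ≤ T k)
    (hD : ∀ k ∈ Finset.Icc 2 kmax,
      Real.sqrt (ξ k) * ((n : ℝ) ^ (-(((k : ℝ) - 1) / 2))) * T k ≤ D) :
    |mixedHamiltonian kmax n ξ g m - injH kmax n ξ g m| ≤ kmax * D := by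
  have : mixedHamiltonian kmax n ξ g m - injH kmax n ξ g m =
      ∑ k ∈ Finset.Icc 2 kmax, Real.sqrt (ξ k) * ((n : ℝ) ^ (-(((k : ℝ) - 1) / 2))) *
        ∑ idx ∈ nonInj k n, g k idx * ∏ j, m (idx j) := by
    unfold mixedHamiltonian injH
    rw [← Finset.sum_sub_distrib]
    refine Finset.sum_congr rfl fun k _ => ?_
    rw [← mul_sub, ← Finset.sum_add_sum_compl (nonInj k n)]
    ring
  rw [this]
  refine (Finset.abs_sum_le_sum_abs _ _).trans ?_
  have hb : ∀ k ∈ Finset.Icc 2 kmax, |Real.sqrt (ξ k) * ((n : ℝ) ^ (-(((k : ℝ) - 1) / 2))) *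
        ∑ idx ∈ nonInj k n, g k idx * ∏ j, m (idx j)| ≤ D := by
    intro k hk
    have h0 : 0 ≤ Real.sqrt (ξ k) * ((n : ℝ) ^ (-(((k : ℝ) - 1) / 2))) := by positivity
    rw [abs_mul, abs_of_nonneg h0]
    exact (mul_le_mul_of_nonneg_left (h k hk) h0).trans (hD k hk)
  have hD0 : 0 ≤ D := (abs_nonneg _).trans (hb 2 (by simp [hk2]))
  refine (Finset.sum_le_card_nsmul _ _ _ hb).trans ?_
  rw [nsmul_eq_mul]
  gcongr
  simp

lemma ub_tendsto (K : ℕ) (a : ℝ) (ha : 0 < a) :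
    Tendsto (fun n : ℕ => (K : ℝ) * ((2 * 2 ^ (K * n)) * Real.exp (-(a * (n : ℝ) ^ 2))))
      atTop (nhds 0) := by
  have h1 : Tendsto (fun n : ℕ => (K : ℝ) * (2 * Real.exp (-(n : ℝ)))) atTop (nhds 0) := by
    have h := (Real.tendsto_exp_neg_atTop_nhds_zero.comp
      (tendsto_natCast_atTop_atTop (R := ℝ))).const_mul 2 |>.const_mul (K : ℝ)
    simpa using h
  refine tendsto_of_tendsto_of_tendsto_of_le_of_le' tendsto_const_nhds h1
    (Eventually.of_forall fun n => by positivity) ?_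
  filter_upwards [(tendsto_natCast_atTop_atTop (R := ℝ)).eventually_ge_atTop
    ((K * Real.log 2 + 1) / a)] with n hn
  rw [mul_assoc]
  gcongr
  have : (2 : ℝ) ^ (K * n) = Real.exp (K * n * Real.log 2) := by
    rw [← Real.rpow_natCast, Real.rpow_def_of_pos two_pos]
    push_cast
    ring_nf
  rw [this, ← Real.exp_add, Real.exp_le_exp]
  rw [div_le_iff₀ ha] at hn
  have h0 : (0 : ℝ) ≤ n := n.cast_nonneg
  nlinarith [mul_le_mul_of_nonneg_left hn h0]

/-- **Rounding to the hypercube** (Sellke). For the mixed `p`-spin Hamiltonian extended to the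
convex hull `[−1,1]^n` of the hypercube, for every `ε > 0`, with probability tending to one,
every `m ∈ [−1,1]^n` admits a hypercube point `σ ∈ {−1,1}^n` with `H_n(σ) ≥ H_n(m) − nε`. -/
theorem rounding_convex_hull_to_cube (kmax : ℕ) (hkmax : 2 ≤ kmax) (ξ : ℕ → ℝ)
    (hξ : ∀ k ∈ Finset.Icc 2 kmax, 0 ≤ ξ k)
    {Ω : Type*} [MeasurableSpace Ω] (μ : Measure Ω) [IsProbabilityMeasure μ]
    (g : Ω → (n : ℕ) → (k : ℕ) → (Fin k → Fin n) → ℝ)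
    (hmeas : ∀ n k idx, Measurable fun ω => g ω n k idx)
    (hindep : ∀ n : ℕ, iIndepFun
      (fun (p : Σ k : {k : ℕ // 2 ≤ k ∧ k ≤ kmax}, Fin k.1 → Fin n) =>
        fun ω => g ω n p.1.1 p.2) μ)
    (hgauss : ∀ n : ℕ, ∀ (p : Σ k : {k : ℕ // 2 ≤ k ∧ k ≤ kmax}, Fin k.1 → Fin n),
      μ.map (fun ω => g ω n p.1.1 p.2) = gaussianReal 0 1) :
    ∀ ε : ℝ, 0 < ε →
      Tendsto (fun n : ℕ =>
        μ {ω | ∀ m : Fin n → ℝ, (∀ i, m i ∈ Set.Icc (-1 : ℝ) 1) →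
            ∃ b : Fin n → Bool,
              mixedHamiltonian kmax n ξ (g ω n) m - (n : ℝ) * ε ≤
                mixedHamiltonian kmax n ξ (g ω n) (signVec b)})
        atTop (nhds 1) := by
  intro ε hε
  set S : ℝ := ∑ k ∈ Finset.Icc 2 kmax, Real.sqrt (ξ k) with hS
  have hS0 : 0 ≤ S := Finset.sum_nonneg fun k _ => Real.sqrt_nonneg _
  have hK0 : (0 : ℝ) < kmax := by exact_mod_cast (by omega : 0 < kmax)
  set δ : ℝ := ε / (2 * kmax) / (1 + S) with hδ
  have hδ0 : 0 < δ := by positivity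
  have hδk : ∀ k ∈ Finset.Icc 2 kmax, Real.sqrt (ξ k) * δ ≤ ε / (2 * kmax) := by
    intro k hk
    have h1 : Real.sqrt (ξ k) ≤ 1 + S := by
      have := Finset.single_le_sum (f := fun k => Real.sqrt (ξ k))
        (fun k _ => Real.sqrt_nonneg _) hk
      linarith
    calc Real.sqrt (ξ k) * δ ≤ (1 + S) * δ := by gcongr
      _ = ε / (2 * kmax) := by rw [hδ]; field_simp
  set a : ℝ := δ ^ 2 / (2 * kmax ^ 2) with ha
  have ha0 : 0 < a := by positivity
  let r : ℕ → ℕ → ℝ := fun n k => (n : ℝ) ^ (-(((k : ℝ) - 1) / 2))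
  let T : ℕ → ℕ → ℝ := fun n k => δ * n / r n k
  let bad : ℕ → Set Ω := fun n => ⋃ k ∈ Finset.Icc 2 kmax,
    ⋃ p : Bool × (Fin k × Fin n → Bool),
      {ω | T n k ≤ bsg p.1 * diagF k n (g ω n k) (fun q => bsg (p.2 q))}
  have hbad : ∀ n : ℕ, 0 < n →
      μ.real (bad n) ≤ (kmax : ℝ) * ((2 * 2 ^ (kmax * n)) * Real.exp (-(a * (n : ℝ) ^ 2))) := by
    intro n hn
    have hn0 : (0 : ℝ) < n := by exact_mod_cast hn
    have hev : ∀ k ∈ Finset.Icc 2 kmax, ∀ p : Bool × (Fin k × Fin n → Bool),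
        μ.real {ω | T n k ≤ bsg p.1 * diagF k n (g ω n k) (fun q => bsg (p.2 q))} ≤
          Real.exp (-(a * (n : ℝ) ^ 2)) := by
      intro k hk p
      have hk' := Finset.mem_Icc.1 hk
      have hr0 : 0 < r n k := Real.rpow_pos_of_pos hn0 _
      have hr2 : r n k ^ 2 = ((n : ℝ) ^ (k - 1))⁻¹ := by
        simp only [r]
        rw [← Real.rpow_natCast, ← Real.rpow_mul hn0.le, ← Real.rpow_natCast, ← Real.rpow_neg hn0.le]
        congr 1
        push_cast [Nat.cast_sub (by omega : 1 ≤ k)]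
        ring
      have hind : iIndepFun (fun (idx : Fin k → Fin n) ω => g ω n k idx) μ :=
        (hindep n).precomp (g := fun idx : Fin k → Fin n => ⟨⟨k, hk'⟩, idx⟩)
          (fun x y h => by simpa using h)
      have hN : ((nonInj k n).card : ℝ) ≤ (kmax : ℝ) ^ 2 * (n : ℝ) ^ (k - 1) := by
        have h1 : ((nonInj k n).card : ℝ) ≤ (k : ℝ) ^ 2 * (n : ℝ) ^ (k - 1) := by
          exact_mod_cast nonInj_card k n
        have h2 : (k : ℝ) ≤ kmax := by exact_mod_cast hk'.2
        refine h1.trans ?_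
        gcongr
      have := gauss_tail μ (fun (idx : Fin k → Fin n) ω => g ω n k idx) (hmeas n k) hind
        (fun idx => hgauss n ⟨⟨k, hk'⟩, idx⟩) (nonInj k n) (nonInj_nonempty k n hk'.1 hn)
        (fun idx => bsg p.1 * ∏ j, bsg (p.2 (j, idx j)))
        (fun idx => by
          rw [mul_pow, bsg_sq, one_mul, ← Finset.prod_pow]
          exact Finset.prod_eq_one fun j _ => bsg_sq _)
        _ (T n k) hN (by positivity)
      convert this using 2
      · ext ω
        simp only [diagF, Finset.mul_sum, Set.mem_ofPred_eq]
        refine iff_of_eq ?_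
        congr 1
        exact Finset.sum_congr rfl fun idx _ => by ring
      · simp only [T]
        rw [div_pow, hr2, ha]
        field_simp
    have hk1 : ∀ k ∈ Finset.Icc 2 kmax,
        μ.real (⋃ p : Bool × (Fin k × Fin n → Bool),
          {ω | T n k ≤ bsg p.1 * diagF k n (g ω n k) (fun q => bsg (p.2 q))}) ≤
          (2 * 2 ^ (kmax * n)) * Real.exp (-(a * (n : ℝ) ^ 2)) := by
      intro k hk
      have hk' := Finset.mem_Icc.1 hk
      refine (measureReal_iUnion_fintype_le _).trans ?_
      refine (Finset.sum_le_card_nsmul _ _ _ fun p _ => hev k hk p).trans ?_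
      rw [nsmul_eq_mul]
      gcongr
      simp only [Finset.card_univ, Fintype.card_prod, Fintype.card_bool, Fintype.card_fun,
        Fintype.card_fin]
      push_cast
      gcongr
      · norm_num
      · exact hk'.2
    refine (measureReal_biUnion_finset_le _ _).trans ?_
    refine (Finset.sum_le_card_nsmul _ _ _ hk1).trans ?_
    rw [nsmul_eq_mul]
    gcongr
    simp
  have hgood : ∀ n : ℕ, 0 < n → ∀ ω ∉ bad n, ∀ m : Fin n → ℝ, (∀ i, m i ∈ Set.Icc (-1 : ℝ) 1) →
            ∃ b : Fin n → Bool,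
              mixedHamiltonian kmax n ξ (g ω n) m - (n : ℝ) * ε ≤
                mixedHamiltonian kmax n ξ (g ω n) (signVec b) := by
    intro n hn ω hω m hm
    have hn0 : (0 : ℝ) < n := by exact_mod_cast hn
    simp only [bad, Set.mem_iUnion, not_exists, Set.mem_ofPred_eq, not_le] at hω
    have hD : ∀ k ∈ Finset.Icc 2 kmax,
        Real.sqrt (ξ k) * ((n : ℝ) ^ (-(((k : ℝ) - 1) / 2))) * T n k ≤ ε / (2 * kmax) * n := by
      intro k hk
      have hr0 : 0 < r n k := Real.rpow_pos_of_pos hn0 _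
      have : Real.sqrt (ξ k) * r n k * T n k = Real.sqrt (ξ k) * δ * n := by
        simp only [T]
        field_simp
      refine this.le.trans ?_
      gcongr
      exact hδk k hk
    have hall : ∀ x : Fin n → ℝ, (∀ i, x i ∈ Set.Icc (-1 : ℝ) 1) →
        |mixedHamiltonian kmax n ξ (g ω n) x - injH kmax n ξ (g ω n) x| ≤ n * ε / 2 := by
      intro x hx
      have := H_sub kmax n hkmax ξ (g ω n) x _ (T n)
        (fun k hk => diag_abs k n (g ω n k) (T n k) (fun s y => hω k hk (s, y)) x hx) hD
      refine this.trans (le_of_eq ?_)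
      field_simp
    obtain ⟨b, hb⟩ := CoordAff.round _ (injH_aff kmax n ξ (g ω n)) m hm
    refine ⟨b, ?_⟩
    have h1 := abs_le.1 (hall m hm)
    have h2 := abs_le.1 (hall (signVec b) fun i => by
      unfold signVec
      split_ifs <;> simp)
    have h3 : injH kmax n ξ (g ω n) m ≤ injH kmax n ξ (g ω n) (signVec b) := hb
    linarith [h1.2, h2.1]
  have hlim : Tendsto (fun n : ℕ => 1 - ENNReal.ofReal
      ((kmax : ℝ) * ((2 * 2 ^ (kmax * n)) * Real.exp (-(a * (n : ℝ) ^ 2))))) atTop (nhds 1) := by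
    have h := ENNReal.tendsto_ofReal (ub_tendsto kmax a ha0)
    rw [ENNReal.ofReal_zero] at h
    have h' := ENNReal.Tendsto.sub (tendsto_const_nhds (x := (1 : ℝ≥0∞))) h (Or.inl ENNReal.one_ne_top)
    simpa using h'
  refine tendsto_of_tendsto_of_tendsto_of_le_of_le' hlim tendsto_const_nhds ?_
    (Eventually.of_forall fun n => prob_le_one)
  filter_upwards [eventually_gt_atTop 0] with n hn
  have hc : (1 : ℝ≥0∞) ≤ μ (bad n)ᶜ + μ (bad n) := by
    rw [← measure_univ (μ := μ), ← Set.compl_union_self (bad n)]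
    exact measure_union_le _ _
  rw [tsub_le_iff_right]
  refine hc.trans (add_le_add (measure_mono fun ω hω => hgood n hn ω hω) ?_)
  rw [← ofReal_measureReal (measure_ne_top μ _)]
  exact ENNReal.ofReal_le_ofReal (hbad n hn)

end
end

section
/- Let n range over even integers and let Σ_n := {σ ∈ {−1,1}^n : Σ_i σ_i = 0}. Let A_n ~ GOE(n) and let c* := lim_{n→∞} (1/(2n)) E[ max_{σ ∈ Σ_n} ⟨σ, A_n σ⟩ ] (this limit exists). Let G_n be an Erdős–Rényi random graph on n vertices in which each of the C(n,2) possible edges is present independently with probability p_n, where n p_n → ∞ and p_n ≤ 1/2, and let A_{G_n} be its adjacency matrix. Then, in probability, (1/(2n)) · max_{σ ∈ Σ_n} ⟨σ, A_{G_n} σ⟩ / √(n p_n (1 − p_n)) → c* as n → ∞. -/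
open MeasureTheory ProbabilityTheory Filter
open scoped NNReal ENNReal

noncomputable section

/-- A random symmetric matrix `A : Ω → (Fin n → Fin n → ℝ)` has the `GOE(n)` distribution:
entries are measurable, the matrix is symmetric, the upper-triangular entries (including the
diagonal) are independent, diagonal entries are `N(0, 2/n)` and off-diagonal entries are
`N(0, 1/n)`. -/
def IsGOE {Ω : Type*} [MeasurableSpace Ω] (μ : Measure Ω) (n : ℕ)
    (A : Ω → Fin n → Fin n → ℝ) : Prop :=
  (∀ i j, Measurable fun ω => A ω i j) ∧
  (∀ ω, ∀ i j, A ω i j = A ω j i) ∧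
  iIndepFun
    (fun (p : {p : Fin n × Fin n // p.1 ≤ p.2}) => fun ω => A ω p.1.1 p.1.2) μ ∧
  (∀ i : Fin n, μ.map (fun ω => A ω i i) = gaussianReal 0 (2 / (n : ℝ≥0))) ∧
  (∀ i j : Fin n, i < j → μ.map (fun ω => A ω i j) = gaussianReal 0 (1 / (n : ℝ≥0)))

/-- The maximum of the quadratic form `⟨σ, Aσ⟩` over the balanced hypercube
`Σ_N = {σ ∈ {−1,1}^N : Σ_i σ_i = 0}`. -/
def balMax (N : ℕ) (A : Fin N → Fin N → ℝ) : ℝ :=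
  ⨆ b : {b : Fin N → Bool // 2 * (Finset.univ.filter (fun i => b i = true)).card = N},
    ∑ i, ∑ j, signVec b.1 i * A i j * signVec b.1 j


lemma map_update_pi {ι E : Type*} [Fintype ι] [DecidableEq ι] [MeasurableSpace E]
    (μ : ι → Measure E) [∀ i, IsProbabilityMeasure (μ i)] (i : ι) (ν : Measure E)
    [IsProbabilityMeasure ν] :
    MeasurePreserving (fun z : (ι → E) × E => Function.update z.1 i z.2)
      ((Measure.pi μ).prod ν) (Measure.pi (Function.update μ i ν)) := by
  have hprob : ∀ j, IsProbabilityMeasure (Function.update μ i ν j) := by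
    intro j
    by_cases h : j = i
    · subst h; simpa
    · simp [Function.update_of_ne h]; infer_instance
  have hm : Measurable (fun z : (ι → E) × E => Function.update z.1 i z.2) := by
    rw [measurable_pi_iff]
    intro j
    by_cases h : j = i
    · subst h; simpa using measurable_snd
    · simp only [Function.update_of_ne h]
      exact (measurable_pi_apply j).comp measurable_fst
  refine ⟨hm, ?_⟩
  symm
  apply Measure.pi_eq
  intro s hs
  rw [Measure.map_apply hm (MeasurableSet.univ_pi hs)]
  have : (fun z : (ι → E) × E => Function.update z.1 i z.2) ⁻¹' (Set.univ.pi s)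
      = (Set.univ.pi (Function.update s i Set.univ)) ×ˢ (s i) := by
    ext z
    simp only [Set.mem_preimage, Set.mem_pi, Set.mem_univ, true_imp_iff, Set.mem_prod]
    constructor
    · intro h
      refine ⟨fun j => ?_, by simpa using h i⟩
      by_cases hj : j = i
      · subst hj; simp
      · simpa [Function.update_of_ne hj] using h j
    · rintro ⟨h1, h2⟩ j
      by_cases hj : j = i
      · subst hj; simpa
      · simpa [Function.update_of_ne hj] using h1 j
  rw [this, Measure.prod_prod, Measure.pi_pi,
    ← Finset.mul_prod_erase Finset.univ _ (Finset.mem_univ i),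
    ← Finset.mul_prod_erase Finset.univ (fun j => Function.update μ i ν j (s j)) (Finset.mem_univ i)]
  simp only [Function.update_self, measure_univ, one_mul]
  rw [mul_comm]
  congr 1
  apply Finset.prod_congr rfl
  intro j hj
  rw [Function.update_of_ne (Finset.ne_of_mem_erase hj), Function.update_of_ne (Finset.ne_of_mem_erase hj)]

lemma integral_pi_update {ι E : Type*} [Fintype ι] [DecidableEq ι] [MeasurableSpace E]
    (μ : ι → Measure E) [∀ i, IsProbabilityMeasure (μ i)] (i : ι) (ν : Measure E)
    [IsProbabilityMeasure ν] (F : (ι → E) → ℝ)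
    (hF : Integrable F (Measure.pi (Function.update μ i ν))) :
    Integrable (fun z : (ι → E) × E => F (Function.update z.1 i z.2)) ((Measure.pi μ).prod ν) ∧
    ∫ x, F x ∂(Measure.pi (Function.update μ i ν))
      = ∫ x, ∫ t, F (Function.update x i t) ∂ν ∂(Measure.pi μ) := by
  have hmp := map_update_pi μ i ν
  have h1 : Integrable (fun z : (ι → E) × E => F (Function.update z.1 i z.2))
      ((Measure.pi μ).prod ν) := hmp.integrable_comp_of_integrable hF
  refine ⟨h1, ?_⟩
  rw [← integral_prod (fun z : (ι → E) × E => F (Function.update z.1 i z.2)) h1]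
  rw [← hmp.map_eq, integral_map hmp.measurable.aemeasurable]
  rw [hmp.map_eq]; exact hF.aestronglyMeasurable

/-- Lindeberg replacement. -/
lemma lindeberg_pi {ι : Type*} [Fintype ι] [DecidableEq ι]
    (μ ν : ι → Measure ℝ) [∀ i, IsProbabilityMeasure (μ i)] [∀ i, IsProbabilityMeasure (ν i)]
    (hμ1 : ∀ i, Integrable (fun t : ℝ => t) (μ i)) (hν1 : ∀ i, Integrable (fun t : ℝ => t) (ν i))
    (hμ2 : ∀ i, Integrable (fun t : ℝ => t ^ 2) (μ i))
    (hν2 : ∀ i, Integrable (fun t : ℝ => t ^ 2) (ν i))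
    (hμ3 : ∀ i, Integrable (fun t : ℝ => |t| ^ 3) (μ i))
    (hν3 : ∀ i, Integrable (fun t : ℝ => |t| ^ 3) (ν i))
    (h1 : ∀ i, ∫ t, t ∂(μ i) = ∫ t, t ∂(ν i))
    (h2 : ∀ i, ∫ t, t ^ 2 ∂(μ i) = ∫ t, t ^ 2 ∂(ν i))
    (F : (ι → ℝ) → ℝ) (hFc : Continuous F) (L : ℝ) (hFg : ∀ x, |F x| ≤ L + ∑ i, |x i|)
    (C : ℝ)
    (hT : ∀ x i, ∃ a b c : ℝ, ∀ t, |F (Function.update x i t) - (a + b * t + c * t ^ 2)|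
      ≤ C * |t| ^ 3) :
    |∫ x, F x ∂(Measure.pi μ) - ∫ x, F x ∂(Measure.pi ν)|
      ≤ ∑ i, C * (∫ t, |t| ^ 3 ∂(μ i) + ∫ t, |t| ^ 3 ∂(ν i)) := by
  have hint : ∀ (ρ : ι → Measure ℝ) [∀ i, IsProbabilityMeasure (ρ i)],
      (∀ i, Integrable (fun t : ℝ => t) (ρ i)) → Integrable F (Measure.pi ρ) := by
    intro ρ _ hρ
    have hg : Integrable (fun x : ι → ℝ => L + ∑ i, |x i|) (Measure.pi ρ) := by
      apply Integrable.add (integrable_const _)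
      apply integrable_finsetSum
      intro i _
      exact ((measurePreserving_eval ρ i).integrable_comp_of_integrable (hρ i)).abs
    refine hg.mono' hFc.aestronglyMeasurable (ae_of_all _ fun x => ?_)
    rw [Real.norm_eq_abs]; exact hFg x
  have key : ∀ (ρ : Measure ℝ) [IsProbabilityMeasure ρ] (f : ℝ → ℝ) (a b c : ℝ),
      Integrable (fun t : ℝ => t) ρ → Integrable (fun t : ℝ => t ^ 2) ρ →
      Integrable (fun t : ℝ => |t| ^ 3) ρ → Continuous f →
      (∀ t, |f t - (a + b * t + c * t ^ 2)| ≤ C * |t| ^ 3) →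
      |∫ t, f t ∂ρ - (a + b * ∫ t, t ∂ρ + c * ∫ t, t ^ 2 ∂ρ)| ≤ C * ∫ t, |t| ^ 3 ∂ρ := by
    intro ρ _ f a b c i1 i2 i3 hf hb
    have ip : Integrable (fun t : ℝ => a + b * t + c * t ^ 2) ρ :=
      ((integrable_const a).add (i1.const_mul b)).add (i2.const_mul c)
    have e1 : ∫ t, (a + b * t + c * t ^ 2) ∂ρ = a + b * ∫ t, t ∂ρ + c * ∫ t, t ^ 2 ∂ρ := by
      rw [integral_add (f := fun t => a + b * t) ((integrable_const a).add (i1.const_mul b))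
        (i2.const_mul c), integral_add (integrable_const a) (i1.const_mul b), integral_const_mul, integral_const_mul]
      simp
    have id : Integrable (fun t => f t - (a + b * t + c * t ^ 2)) ρ := by
      refine (i3.const_mul C).mono' (by fun_prop) (ae_of_all _ fun t => ?_)
      rw [Real.norm_eq_abs]; exact hb t
    have iF : Integrable f ρ := by
      have := id.add ip
      refine this.congr (ae_of_all _ fun t => ?_)
      simp
    rw [← e1, ← integral_sub iF ip, ← integral_const_mul]
    refine (abs_integral_le_integral_abs).trans ?_
    exact integral_mono id.abs (i3.const_mul C) hb
  have step : ∀ (ρ : ι → Measure ℝ) [∀ i, IsProbabilityMeasure (ρ i)] (i : ι),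
      (∀ i, Integrable (fun t : ℝ => t) (ρ i)) → ρ i = μ i →
      |∫ x, F x ∂(Measure.pi ρ) - ∫ x, F x ∂(Measure.pi (Function.update ρ i (ν i)))|
        ≤ C * (∫ t, |t| ^ 3 ∂(μ i) + ∫ t, |t| ^ 3 ∂(ν i)) := by
    intro ρ _ i hρ hi
    have hprob : ∀ j, IsProbabilityMeasure (Function.update ρ i (ν i) j) := by
      intro j
      by_cases h : j = i
      · subst h; simp; infer_instance
      · simp [Function.update_of_ne h]; infer_instance
    have hu : Function.update ρ i (μ i) = ρ := by rw [← hi]; simp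
    have A1 := integral_pi_update ρ i (μ i) F (by rw [hu]; exact hint ρ hρ)
    have A2 := integral_pi_update ρ i (ν i) F (by
      apply hint
      intro j
      by_cases h : j = i
      · subst h; simpa using hν1 j
      · simpa [Function.update_of_ne h] using hρ j)
    rw [hu] at A1
    rw [A1.2, A2.2, ← integral_sub A1.1.integral_prod_left A2.1.integral_prod_left]
    have hpt : ∀ x : ι → ℝ, ‖∫ t, F (Function.update x i t) ∂(μ i) - ∫ t, F (Function.update x i t) ∂(ν i)‖
        ≤ C * (∫ t, |t| ^ 3 ∂(μ i) + ∫ t, |t| ^ 3 ∂(ν i)) := by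
      intro x
      obtain ⟨a, b, c, h⟩ := hT x i
      have hcf : Continuous (fun t => F (Function.update x i t)) :=
        hFc.comp (continuous_const.update i continuous_id)
      have k1 := key (μ i) _ a b c (hμ1 i) (hμ2 i) (hμ3 i) hcf h
      have k2 := key (ν i) _ a b c (hν1 i) (hν2 i) (hν3 i) hcf h
      rw [h1 i, h2 i] at k1
      rw [Real.norm_eq_abs]
      rw [abs_le] at *
      constructor <;> linarith [k1.1, k1.2, k2.1, k2.2]
    have := norm_integral_le_of_norm_le_const (μ := Measure.pi ρ) (ae_of_all _ hpt)
    simpa using this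
  have main : ∀ s : Finset ι,
      |∫ x, F x ∂(Measure.pi μ) - ∫ x, F x ∂(Measure.pi (s.piecewise ν μ))|
      ≤ ∑ i ∈ s, C * (∫ t, |t| ^ 3 ∂(μ i) + ∫ t, |t| ^ 3 ∂(ν i)) := by
    intro s
    induction s using Finset.induction_on with
    | empty => simp
    | insert i s his ih =>
      rw [Finset.sum_insert his, Finset.piecewise_insert]
      have hprob : ∀ j, IsProbabilityMeasure (s.piecewise ν μ j) := by
        intro j
        by_cases h : j ∈ s
        · simp [h]; infer_instance
        · simp [h]; infer_instance
      have := step (s.piecewise ν μ) i (by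
        intro j
        by_cases h : j ∈ s
        · simpa [h] using hν1 j
        · simpa [h] using hμ1 j) (by simp [his])
      refine (abs_sub_le _ (∫ x, F x ∂(Measure.pi (s.piecewise ν μ))) _).trans ?_
      linarith
  simpa using main Finset.univ

/-- Bounded differences variance bound. -/
lemma var_pi_le {ι : Type*} [Fintype ι] [DecidableEq ι] (μ : ι → Measure Bool)
    [∀ i, IsProbabilityMeasure (μ i)] (s : Finset ι) (c : ℝ) :
    ∀ F : (ι → Bool) → ℝ, (∀ x i t, |F x - F (Function.update x i t)| ≤ c) →
      (∀ x, ∀ i ∉ s, ∀ t, F (Function.update x i t) = F x) →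
      ∫ x, F x ^ 2 ∂(Measure.pi μ) - (∫ x, F x ∂(Measure.pi μ)) ^ 2 ≤ s.card * c ^ 2 := by
  induction s using Finset.induction_on with
  | empty =>
    intro F hF h0
    have hconst : ∀ x y, F x = F y := by
      intro x y
      have : ∀ u : Finset ι, F (u.piecewise y x) = F x := by
        intro u
        induction u using Finset.induction_on with
        | empty => simp
        | insert i u _ ih => rw [Finset.piecewise_insert, h0 _ i (by simp), ih]
      simpa using (this Finset.univ).symm
    have : F = fun _ => F (fun _ => true) := by ext x; exact hconst _ _
    rw [this]; simp
  | insert i s his ih =>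
    intro F hF h0
    have hii : ∀ G : (ι → Bool) → ℝ, Integrable G (Measure.pi μ) := fun G => Integrable.of_finite
    have hi1 : ∀ G : Bool → ℝ, Integrable G (μ i) := fun G => Integrable.of_finite
    have avg : ∀ G : (ι → Bool) → ℝ, ∫ x, G x ∂(Measure.pi μ)
        = ∫ x, ∫ t, G (Function.update x i t) ∂(μ i) ∂(Measure.pi μ) := by
      intro G
      have := (integral_pi_update μ i (μ i) G (by simpa using hii G)).2
      simpa using this
    set G : (ι → Bool) → ℝ := fun x => ∫ t, F (Function.update x i t) ∂(μ i) with hG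
    have ihG := ih G (by
      intro x j t
      simp only [hG]
      rw [← integral_sub (hi1 _) (hi1 _), ← Real.norm_eq_abs]
      have := norm_integral_le_of_norm_le_const (μ := μ i) (C := c)
        (f := fun r => F (Function.update x i r) - F (Function.update (Function.update x j t) i r))
        (ae_of_all _ (by
          intro r
          rw [Real.norm_eq_abs]
          by_cases hj : j = i
          · subst hj
            simp only [Function.update_idem, sub_self, abs_zero]
            exact (abs_nonneg _).trans (hF x j t)
          · rw [Function.update_comm hj]
            exact hF _ _ _))
      simpa [-Bool.univ_eq] using this) (by
      intro x j hj t
      simp only [hG]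
      by_cases hji : j = i
      · subst hji; simp
      · congr 1; ext r
        rw [Function.update_comm hji]
        exact h0 _ j (by simp [hj, hji]) t)
    have e1 : ∫ x, G x ∂(Measure.pi μ) = ∫ x, F x ∂(Measure.pi μ) := (avg F).symm
    have e2 : ∫ x, F x ^ 2 ∂(Measure.pi μ) - ∫ x, G x ^ 2 ∂(Measure.pi μ) ≤ c ^ 2 := by
      rw [avg (fun x => F x ^ 2), ← integral_sub (hii _) (hii _)]
      have hpt : ∀ x, ∫ t, F (Function.update x i t) ^ 2 ∂(μ i) - G x ^ 2 ≤ c ^ 2 := by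
        intro x
        have ha : ∫ t, F (Function.update x i t) ^ 2 ∂(μ i) - G x ^ 2
            = ∫ t, (F (Function.update x i t) - F x) ^ 2 ∂(μ i) - (G x - F x) ^ 2 := by
          have : ∀ t, (F (Function.update x i t) - F x) ^ 2
            = F (Function.update x i t) ^ 2 - (2 * F x * F (Function.update x i t) - F x ^ 2) := by
            intro t; ring
          simp only [this]
          rw [integral_sub (hi1 _) (hi1 _), integral_sub (hi1 _) (hi1 _), integral_const_mul]
          simp [hG, -Bool.univ_eq]; ring
        have hb : ∫ t, (F (Function.update x i t) - F x) ^ 2 ∂(μ i) ≤ ∫ t, c ^ 2 ∂(μ i) := by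
          apply integral_mono (hi1 _) (hi1 _)
          intro t
          have := hF x i t
          rw [abs_sub_comm] at this
          exact sq_le_sq' (by linarith [neg_abs_le (F (Function.update x i t) - F x)])
            ((le_abs_self _).trans this)
        simp [-Bool.univ_eq] at hb
        nlinarith [sq_nonneg (G x - F x)]
      have := integral_mono (μ := Measure.pi μ) (hii _) (integrable_const (c ^ 2)) hpt
      simpa using this
    rw [Finset.card_insert_of_notMem his]
    push_cast
    rw [e1] at ihG
    linarith

lemma bound_of_deriv {f f' : ℝ → ℝ} {K : ℝ} {k : ℕ} (hK : 0 ≤ K) (h0 : f 0 = 0)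
    (hd : ∀ u, HasDerivAt f (f' u) u) (hb : ∀ u, |f' u| ≤ K * |u| ^ k) (u : ℝ) :
    |f u| ≤ K * |u| ^ (k + 1) := by
  have := (convex_uIcc (0:ℝ) u).norm_image_sub_le_of_norm_hasDerivWithin_le (f := f) (f' := f')
    (C := K * |u| ^ k) (x := 0) (y := u) (fun x _ => (hd x).hasDerivWithinAt)
    (by
      intro x hx
      refine (hb x).trans ?_
      have : |x| ≤ |u| := by simpa using Set.abs_sub_left_of_mem_uIcc hx
      gcongr) Set.left_mem_uIcc Set.right_mem_uIcc
  simp [h0] at this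
  rw [pow_succ]; linarith

lemma log_taylor (P Q : ℝ) (hP : 0 ≤ P) (hQ : 0 ≤ Q) (hPQ : 0 < P + Q) :
    ∃ a b c : ℝ, ∀ u : ℝ,
      |Real.log (P * Real.exp u + Q * Real.exp (-u)) - (a + b * u + c * u ^ 2)| ≤ 2 * |u| ^ 3 := by
  set Z : ℝ → ℝ := fun u => P * Real.exp u + Q * Real.exp (-u) with hZ
  set W : ℝ → ℝ := fun u => P * Real.exp u - Q * Real.exp (-u) with hW
  have hZpos : ∀ u, 0 < Z u := by
    intro u
    rcases hP.lt_or_eq with h | h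
    · have := Real.exp_pos u; have := Real.exp_pos (-u); simp only [hZ]; positivity
    · have : 0 < Q := by linarith
      have := Real.exp_pos u; have := Real.exp_pos (-u); simp only [hZ]; positivity
  have hdn : ∀ u : ℝ, HasDerivAt (fun u => Real.exp (-u)) (-Real.exp (-u)) u := by
    intro u
    simpa using (hasDerivAt_neg u).exp
  have dZ : ∀ u, HasDerivAt Z (W u) u := by
    intro u
    have := ((Real.hasDerivAt_exp u).const_mul P).add ((hdn u).const_mul Q)
    convert! this using 1
    simp only [hW]; ring
  have dW : ∀ u, HasDerivAt W (Z u) u := by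
    intro u
    have := ((Real.hasDerivAt_exp u).const_mul P).sub ((hdn u).const_mul Q)
    convert! this using 1
    simp only [hZ]; ring
  set m : ℝ → ℝ := fun u => W u / Z u with hm
  have hm1 : ∀ u, |m u| ≤ 1 := by
    intro u
    simp only [hm]
    rw [abs_div, abs_of_pos (hZpos u), div_le_one (hZpos u), abs_le]
    have h1 : 0 ≤ P * Real.exp u := by positivity
    have h2 : 0 ≤ Q * Real.exp (-u) := by positivity
    simp only [hW, hZ]
    constructor <;> linarith
  have dm : ∀ u, HasDerivAt m (1 - m u ^ 2) u := by
    intro u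
    have := (dW u).div (dZ u) (hZpos u).ne'
    convert! this using 1
    have := (hZpos u).ne'
    simp only [hm]
    field_simp
  have dl : ∀ u, HasDerivAt (fun u => Real.log (Z u)) (m u) u := fun u => (dZ u).log (hZpos u).ne'
  have d3 : ∀ u, HasDerivAt (fun u => (1 - m u ^ 2) - (1 - m 0 ^ 2)) (-(2 * m u * (1 - m u ^ 2))) u := by
    intro u
    have := (((dm u).pow 2).const_sub 1).sub_const (1 - m 0 ^ 2)
    convert! this using 1
    push_cast; ring
  have b3 : ∀ u, |-(2 * m u * (1 - m u ^ 2))| ≤ 2 * |u| ^ 0 := by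
    intro u
    have h1 := hm1 u
    have h2 : |1 - m u ^ 2| ≤ 1 := by
      rw [abs_le]
      have : m u ^ 2 ≤ 1 := by rw [sq_le_one_iff_abs_le_one]; exact h1
      constructor <;> nlinarith [sq_nonneg (m u)]
    rw [abs_neg, abs_mul, abs_mul]
    simp
    nlinarith [abs_nonneg (m u), abs_nonneg (1 - m u ^ 2)]
  have b2 := bound_of_deriv (by norm_num) (by simp) d3 b3
  have d2 : ∀ u, HasDerivAt (fun u => m u - m 0 - (1 - m 0 ^ 2) * u) ((1 - m u ^ 2) - (1 - m 0 ^ 2)) u := by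
    intro u
    have := ((dm u).sub_const (m 0)).sub ((hasDerivAt_id u).const_mul (1 - m 0 ^ 2))
    convert! this using 1
    simp
  have b1 := bound_of_deriv (by norm_num) (by simp) d2 b2
  have d1 : ∀ u, HasDerivAt (fun u => Real.log (Z u) - (Real.log (Z 0) + m 0 * u + ((1 - m 0 ^ 2) / 2) * u ^ 2))
      (m u - m 0 - (1 - m 0 ^ 2) * u) u := by
    intro u
    have := (dl u).sub ((((hasDerivAt_id u).const_mul (m 0)).const_add (Real.log (Z 0))).add
      (((hasDerivAt_id u).pow 2).const_mul ((1 - m 0 ^ 2) / 2)))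
    convert! this using 1
    simp; ring
  have b0 := bound_of_deriv (by norm_num) (by simp) d1 b1
  exact ⟨Real.log (Z 0), m 0, (1 - m 0 ^ 2) / 2, b0⟩

section absmax
variable {ι B : Type*} [Fintype ι] [Fintype B] [Nonempty B]

def spinH (s : B → ι → ℝ) (b : B) (x : ι → ℝ) : ℝ := ∑ i, x i * s b i
def spinM (s : B → ι → ℝ) (x : ι → ℝ) : ℝ := ⨆ b, spinH s b x
def spinF (s : B → ι → ℝ) (β : ℝ) (x : ι → ℝ) : ℝ :=
  (1 / β) * Real.log (∑ b, Real.exp (β * spinH s b x))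

lemma spinH_le_M (s : B → ι → ℝ) (b : B) (x : ι → ℝ) : spinH s b x ≤ spinM s x :=
  le_ciSup (f := fun b => spinH s b x) (Set.finite_range _).bddAbove b

lemma spinM_lip (s : B → ι → ℝ) (hs : ∀ b i, |s b i| = 1) (x y : ι → ℝ) :
    |spinM s x - spinM s y| ≤ ∑ i, |x i - y i| := by
  have key : ∀ x y : ι → ℝ, spinM s x ≤ spinM s y + ∑ i, |x i - y i| := by
    intro x y
    apply ciSup_le
    intro b
    have h1 := spinH_le_M s b y
    have h2 : spinH s b x - spinH s b y ≤ ∑ i, |x i - y i| := by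
      unfold spinH
      rw [← Finset.sum_sub_distrib]
      apply Finset.sum_le_sum
      intro i _
      rw [← sub_mul]
      refine (le_abs_self _).trans ?_
      rw [abs_mul, hs, mul_one]
    linarith
  rw [abs_le]
  have h1 := key x y
  have h2 := key y x
  simp only [abs_sub_comm (y _) (x _)] at h2
  constructor <;> linarith

lemma spinM_growth (s : B → ι → ℝ) (hs : ∀ b i, |s b i| = 1) (x : ι → ℝ) :
    |spinM s x| ≤ ∑ i, |x i| := by
  have := spinM_lip s hs x 0
  have h0 : spinM s 0 = 0 := by simp [spinM, spinH]
  simpa [h0] using this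

lemma spinM_cont (s : B → ι → ℝ) (hs : ∀ b i, |s b i| = 1) : Continuous (spinM s) := by
  rw [continuous_iff_continuousAt]
  intro y
  rw [ContinuousAt, tendsto_iff_dist_tendsto_zero]
  have : Tendsto (fun x : ι → ℝ => ∑ i, |x i - y i|) (nhds y) (nhds 0) := by
    have hc : Continuous (fun x : ι → ℝ => ∑ i, |x i - y i|) := by fun_prop
    simpa using hc.tendsto y
  refine squeeze_zero (fun _ => dist_nonneg) (fun x => ?_) this
  rw [Real.dist_eq]; exact spinM_lip s hs x y

lemma spinF_bounds (s : B → ι → ℝ) {β : ℝ} (hβ : 0 < β) (x : ι → ℝ) :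
    spinM s x ≤ spinF s β x ∧ spinF s β x ≤ spinM s x + Real.log (Fintype.card B) / β := by
  have hpos : 0 < ∑ b, Real.exp (β * spinH s b x) :=
    Finset.sum_pos (fun b _ => Real.exp_pos _) Finset.univ_nonempty
  constructor
  · apply ciSup_le
    intro b
    unfold spinF
    rw [one_div, inv_mul_eq_div, le_div_iff₀ hβ, mul_comm, Real.le_log_iff_exp_le hpos]
    exact Finset.single_le_sum (f := fun b => Real.exp (β * spinH s b x))
      (fun b _ => (Real.exp_pos _).le) (Finset.mem_univ b)
  · have hcard : (0:ℝ) < Fintype.card B := by exact_mod_cast Fintype.card_pos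
    have : Real.log (∑ b, Real.exp (β * spinH s b x)) ≤ Real.log (Fintype.card B) + β * spinM s x := by
      rw [← Real.log_exp (β * spinM s x), ← Real.log_mul hcard.ne' (Real.exp_pos _).ne']
      apply Real.log_le_log hpos
      rw [← nsmul_eq_mul, ← Finset.card_univ]
      apply Finset.sum_le_card_nsmul
      intro b _
      apply Real.exp_le_exp.mpr
      exact mul_le_mul_of_nonneg_left (spinH_le_M s b x) hβ.le
    unfold spinF
    rw [one_div, inv_mul_eq_div, div_le_iff₀ hβ]
    have e : (spinM s x + Real.log (Fintype.card B) / β) * β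
      = Real.log (Fintype.card B) + β * spinM s x := by field_simp; ring
    rw [e]; exact this

lemma spinF_cont (s : B → ι → ℝ) (β : ℝ) : Continuous (spinF s β) := by
  unfold spinF spinH
  refine continuous_const.mul (Continuous.log (by fun_prop) fun x => ?_)
  exact (Finset.sum_pos (fun b _ => Real.exp_pos _) Finset.univ_nonempty).ne'

lemma spinF_taylor [DecidableEq ι] (s : B → ι → ℝ) (hs : ∀ b i, s b i = 1 ∨ s b i = -1) {β : ℝ} (hβ : 0 < β)
    (x : ι → ℝ) (i : ι) : ∃ a b c : ℝ, ∀ t,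
      |spinF s β (Function.update x i t) - (a + b * t + c * t ^ 2)| ≤ (2 * β ^ 2) * |t| ^ 3 := by
  classical
  set x0 := Function.update x i 0 with hx0
  have hH : ∀ b t, spinH s b (Function.update x i t) = spinH s b x0 + t * s b i := by
    intro b t
    unfold spinH
    rw [← Finset.add_sum_erase Finset.univ _ (Finset.mem_univ i),
      ← Finset.add_sum_erase Finset.univ (fun j => x0 j * s b j) (Finset.mem_univ i)]
    simp only [hx0, Function.update_self, zero_mul, zero_add]
    rw [add_comm]
    congr 1
    apply Finset.sum_congr rfl
    intro j hj
    rw [Function.update_of_ne (Finset.ne_of_mem_erase hj), Function.update_of_ne (Finset.ne_of_mem_erase hj)]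
  set P := ∑ b, if s b i = 1 then Real.exp (β * spinH s b x0) else 0 with hP
  set Q := ∑ b, if s b i = 1 then 0 else Real.exp (β * spinH s b x0) with hQ
  have hP0 : 0 ≤ P := Finset.sum_nonneg fun b _ => by split_ifs <;> positivity
  have hQ0 : 0 ≤ Q := Finset.sum_nonneg fun b _ => by split_ifs <;> positivity
  have hPQ : 0 < P + Q := by
    rw [hP, hQ, ← Finset.sum_add_distrib]
    refine Finset.sum_pos (fun b _ => ?_) Finset.univ_nonempty
    split_ifs <;> simp <;> positivity
  have hZ : ∀ t, ∑ b, Real.exp (β * spinH s b (Function.update x i t))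
      = P * Real.exp (β * t) + Q * Real.exp (-(β * t)) := by
    intro t
    rw [hP, hQ, Finset.sum_mul, Finset.sum_mul, ← Finset.sum_add_distrib]
    apply Finset.sum_congr rfl
    intro b _
    rw [hH, mul_add, Real.exp_add]
    rcases hs b i with h | h
    · simp [h]
    · have : ¬ ((-1:ℝ) = 1) := by norm_num
      simp [h, this]
  obtain ⟨a, b, c, h⟩ := log_taylor P Q hP0 hQ0 hPQ
  refine ⟨a / β, b, c * β, fun t => ?_⟩
  have := h (β * t)
  unfold spinF
  rw [hZ]
  have e : 1 / β * Real.log (P * Real.exp (β * t) + Q * Real.exp (-(β * t))) - (a / β + b * t + c * β * t ^ 2)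
    = (1 / β) * (Real.log (P * Real.exp (β * t) + Q * Real.exp (-(β * t))) - (a + b * (β * t) + c * (β * t) ^ 2)) := by
    field_simp
  rw [e, abs_mul, abs_of_pos (by positivity : 0 < 1 / β)]
  calc _ ≤ (1 / β) * (2 * |β * t| ^ 3) := by gcongr
    _ = _ := by rw [abs_mul, abs_of_pos hβ]; field_simp

end absmax

lemma spinM_compare {ι B : Type*} [Fintype ι] [DecidableEq ι] [Fintype B] [Nonempty B]
    (s : B → ι → ℝ) (hs : ∀ b i, s b i = 1 ∨ s b i = -1) {β : ℝ} (hβ : 0 < β)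
    (μ ν : ι → Measure ℝ) [∀ i, IsProbabilityMeasure (μ i)] [∀ i, IsProbabilityMeasure (ν i)]
    (hμ1 : ∀ i, Integrable (fun t : ℝ => t) (μ i)) (hν1 : ∀ i, Integrable (fun t : ℝ => t) (ν i))
    (hμ2 : ∀ i, Integrable (fun t : ℝ => t ^ 2) (μ i))
    (hν2 : ∀ i, Integrable (fun t : ℝ => t ^ 2) (ν i))
    (hμ3 : ∀ i, Integrable (fun t : ℝ => |t| ^ 3) (μ i))
    (hν3 : ∀ i, Integrable (fun t : ℝ => |t| ^ 3) (ν i))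
    (h1 : ∀ i, ∫ t, t ∂(μ i) = ∫ t, t ∂(ν i))
    (h2 : ∀ i, ∫ t, t ^ 2 ∂(μ i) = ∫ t, t ^ 2 ∂(ν i)) :
    |∫ x, spinM s x ∂(Measure.pi μ) - ∫ x, spinM s x ∂(Measure.pi ν)|
      ≤ Real.log (Fintype.card B) / β +
        ∑ i, 2 * β ^ 2 * (∫ t, |t| ^ 3 ∂(μ i) + ∫ t, |t| ^ 3 ∂(ν i)) := by
  have hs1 : ∀ b i, |s b i| = 1 := by
    intro b i; rcases hs b i with h | h <;> simp [h]
  set L := Real.log (Fintype.card B) / β with hL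
  have hL0 : 0 ≤ L := by
    have := Real.log_natCast_nonneg (Fintype.card B); positivity
  have hFg : ∀ x, |spinF s β x| ≤ L + ∑ i, |x i| := by
    intro x
    have h1 := spinM_growth s hs1 x
    have h2 := spinF_bounds s hβ x
    rw [abs_le] at *
    constructor <;> linarith [h1.1, h1.2, h2.1, h2.2]
  have main := lindeberg_pi μ ν hμ1 hν1 hμ2 hν2 hμ3 hν3 h1 h2 (spinF s β) (spinF_cont s β) L hFg
    (2 * β ^ 2) (spinF_taylor s hs hβ)
  have hcl : ∀ (ρ : ι → Measure ℝ) [∀ i, IsProbabilityMeasure (ρ i)],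
      (∀ i, Integrable (fun t : ℝ => t) (ρ i)) →
      ∫ x, spinM s x ∂(Measure.pi ρ) ≤ ∫ x, spinF s β x ∂(Measure.pi ρ) ∧
      ∫ x, spinF s β x ∂(Measure.pi ρ) ≤ ∫ x, spinM s x ∂(Measure.pi ρ) + L := by
    intro ρ _ hρ
    have hg : Integrable (fun x : ι → ℝ => L + ∑ i, |x i|) (Measure.pi ρ) := by
      apply Integrable.add (integrable_const _)
      apply integrable_finsetSum
      intro i _
      exact ((measurePreserving_eval ρ i).integrable_comp_of_integrable (hρ i)).abs
    have iF : Integrable (spinF s β) (Measure.pi ρ) :=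
      hg.mono' (spinF_cont s β).aestronglyMeasurable (ae_of_all _ fun x => hFg x)
    have iM : Integrable (spinM s) (Measure.pi ρ) :=
      hg.mono' (spinM_cont s hs1).aestronglyMeasurable (ae_of_all _ fun x => by
        rw [Real.norm_eq_abs]; linarith [spinM_growth s hs1 x])
    refine ⟨integral_mono iM iF fun x => (spinF_bounds s hβ x).1, ?_⟩
    have e : ∫ x, (spinM s x + L) ∂(Measure.pi ρ) = ∫ x, spinM s x ∂(Measure.pi ρ) + L := by
      rw [integral_add iM (integrable_const L)]; simp
    rw [← e]
    exact integral_mono iF (iM.add (integrable_const L)) fun x => (spinF_bounds s hβ x).2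
  have c1 := hcl μ hμ1
  have c2 := hcl ν hν1
  rw [abs_le] at *
  constructor <;> linarith [main.1, main.2, c1.1, c1.2, c2.1, c2.2]

lemma chebyshev_pi {ι : Type*} [Fintype ι] [DecidableEq ι] (μ : ι → Measure Bool)
    [∀ i, IsProbabilityMeasure (μ i)] (c : ℝ) (F : (ι → Bool) → ℝ)
    (hF : ∀ x i t, |F x - F (Function.update x i t)| ≤ c) {δ : ℝ} (hδ : 0 < δ) :
    (Measure.pi μ) {x | δ ≤ |F x - ∫ y, F y ∂(Measure.pi μ)|}
      ≤ ENNReal.ofReal ((Fintype.card ι * c ^ 2) / δ ^ 2) := by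
  have hL : MemLp F 2 (Measure.pi μ) := MemLp.of_discrete
  refine (meas_ge_le_variance_div_sq hL hδ).trans ?_
  apply ENNReal.ofReal_le_ofReal
  gcongr
  rw [variance_eq_sub hL]
  exact var_pi_le μ Finset.univ c F hF (by simp)

/-- Index types. -/
abbrev Pairs (N : ℕ) := {q : Fin N × Fin N // q.1 < q.2}
abbrev Bal (N : ℕ) :=
  {b : Fin N → Bool // 2 * (Finset.univ.filter (fun i => b i = true)).card = N}

def sgn (N : ℕ) (b : Bal N) (q : Pairs N) : ℝ := signVec b.1 q.1.1 * signVec b.1 q.1.2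

lemma signVec_sq {N : ℕ} (b : Fin N → Bool) (i : Fin N) : signVec b i * signVec b i = 1 := by
  unfold signVec; split_ifs <;> norm_num

lemma sgn_pm (N : ℕ) (b : Bal N) (q : Pairs N) : sgn N b q = 1 ∨ sgn N b q = -1 := by
  unfold sgn signVec; split_ifs <;> norm_num

lemma sgn_abs (N : ℕ) (b : Bal N) (q : Pairs N) : |sgn N b q| = 1 := by
  rcases sgn_pm N b q with h | h <;> simp [h]

lemma bal_nonempty (n : ℕ) : Nonempty (Bal (2 * n)) := by
  refine ⟨⟨fun i => decide (i.1 < n), ?_⟩⟩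
  have : (Finset.univ.filter (fun i : Fin (2 * n) => decide (i.1 < n) = true)).card = n := by
    simp [Fin.card_filter_val_lt]
    omega
  rw [this]

lemma quad_split (N : ℕ) (A : Fin N → Fin N → ℝ) (hA : ∀ i j, A i j = A j i) (b : Bal N) :
    ∑ i, ∑ j, signVec b.1 i * A i j * signVec b.1 j
      = ∑ i, A i i + 2 * spinH (sgn N) b (fun q => A q.1.1 q.1.2) := by
  set f : Fin N → Fin N → ℝ := fun i j => signVec b.1 i * A i j * signVec b.1 j with hf
  have hfs : ∀ i j, f i j = f j i := by intro i j; simp only [hf]; rw [hA i j]; ring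
  have hfd : ∀ i, f i i = A i i := by
    intro i; simp only [hf]
    rw [mul_right_comm, signVec_sq, one_mul]
  have e1 : spinH (sgn N) b (fun q => A q.1.1 q.1.2) = ∑ i, ∑ j, if i < j then f i j else 0 := by
    rw [← Fintype.sum_prod_type' (f := fun i j => if i < j then f i j else 0)]
    rw [← Finset.sum_filter]
    rw [Finset.sum_subtype (p := fun q : Fin N × Fin N => q.1 < q.2) _ (by simp)]
    unfold spinH sgn
    apply Finset.sum_congr rfl
    intro q _
    simp only [hf]; ring
  have e2 : ∑ i, ∑ j, (if j < i then f i j else 0) = ∑ i, ∑ j, if i < j then f i j else 0 := by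
    rw [Finset.sum_comm]
    apply Finset.sum_congr rfl; intro i _
    apply Finset.sum_congr rfl; intro j _
    rw [hfs]
  have e3 : ∑ i, ∑ j, (if i = j then f i j else 0) = ∑ i, A i i := by
    apply Finset.sum_congr rfl; intro i _
    simp [hfd]
  have e4 : ∀ i j, f i j = (if i = j then f i j else 0) + (if i < j then f i j else 0)
      + (if j < i then f i j else 0) := by
    intro i j
    rcases lt_trichotomy i j with h | h | h
    · simp [h, h.ne, h.le]
    · simp [h]
    · simp [h, h.ne', h.le]
  calc ∑ i, ∑ j, f i j = ∑ i, ∑ j, ((if i = j then f i j else 0) + (if i < j then f i j else 0)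
      + (if j < i then f i j else 0)) := by
        apply Finset.sum_congr rfl; intro i _
        apply Finset.sum_congr rfl; intro j _
        exact e4 i j
    _ = _ := by
      simp only [Finset.sum_add_distrib]
      rw [e2, e3, e1]; ring

lemma iSup_affine {B : Type*} [Fintype B] [Nonempty B] (f : B → ℝ) (c k : ℝ) (hk : 0 ≤ k) :
    ⨆ b, (c + k * f b) = c + k * ⨆ b, f b := by
  rw [Real.mul_iSup_of_nonneg hk, add_ciSup (Set.finite_range _).bddAbove]

lemma balMax_eq (N : ℕ) [Nonempty (Bal N)] (A : Fin N → Fin N → ℝ) (hA : ∀ i j, A i j = A j i) :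
    balMax N A = ∑ i, A i i + 2 * spinM (sgn N) (fun q => A q.1.1 q.1.2) := by
  unfold balMax spinM
  rw [← iSup_affine _ _ _ (by norm_num)]
  congr 1; ext b
  exact quad_split N A hA b

lemma sum_sgn (N : ℕ) (b : Bal N) : ∑ q, sgn N b q = -(N : ℝ) / 2 := by
  have h := quad_split N (fun _ _ => 1) (by simp) b
  have h0 : ∑ i, signVec b.1 i = 0 := by
    have e : ∀ i, signVec b.1 i = 2 * (if b.1 i = true then (1:ℝ) else 0) - 1 := by
      intro i; unfold signVec; split_ifs <;> norm_num
    simp only [e]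
    rw [Finset.sum_sub_distrib, ← Finset.mul_sum, Finset.sum_boole]
    have := b.2
    have h2 : (2:ℝ) * ((Finset.univ.filter (fun i => b.1 i = true)).card : ℝ) = N := by
      exact_mod_cast this
    rw [h2]; simp
  have e : ∑ i, ∑ j, signVec b.1 i * 1 * signVec b.1 j = 0 := by
    simp only [mul_one]
    rw [← Finset.sum_mul_sum, h0]; simp
  rw [e] at h
  simp [spinH] at h
  linarith

lemma spinM_affine (N : ℕ) [Nonempty (Bal N)] (x : Pairs N → ℝ) (s p : ℝ) (hs : 0 ≤ s) :
    spinM (sgn N) (fun q => s * x q + p) = s * spinM (sgn N) x - p * N / 2 := by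
  unfold spinM
  have := iSup_affine (fun b => spinH (sgn N) b x) (-(p * N / 2)) s hs
  rw [sub_eq_neg_add, ← this]
  congr 1; ext b
  unfold spinH
  simp only [add_mul, mul_assoc]
  rw [Finset.sum_add_distrib, ← Finset.mul_sum, ← Finset.mul_sum, sum_sgn]
  ring

lemma card_pairs_le (N : ℕ) : (Fintype.card (Pairs N) : ℝ) ≤ (N:ℝ) ^ 2 := by
  have := Fintype.card_subtype_le (fun q : Fin N × Fin N => q.1 < q.2)
  simp at this
  rw [pow_two]; exact_mod_cast this

lemma log_card_bal (N : ℕ) [Nonempty (Bal N)] :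
    Real.log (Fintype.card (Bal N)) ≤ N := by
  have h := Fintype.card_subtype_le
    (fun b : Fin N → Bool => 2 * (Finset.univ.filter (fun i => b i = true)).card = N)
  have h2 : (Fintype.card (Bal N) : ℝ) ≤ 2 ^ N := by
    simp at h; exact_mod_cast h
  have h0 : (0:ℝ) < Fintype.card (Bal N) := by exact_mod_cast Fintype.card_pos
  calc _ ≤ Real.log (2 ^ N) := Real.log_le_log h0 h2
    _ = N * Real.log 2 := by rw [Real.log_pow]
    _ ≤ N * 1 := by
      gcongr
      have := Real.log_two_lt_d9; linarith
    _ = N := mul_one _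

lemma goe_integral {Ω : Type*} [MeasurableSpace Ω] (μ : Measure Ω) [IsProbabilityMeasure μ]
    (N : ℕ) [Nonempty (Bal N)] (A : Ω → Fin N → Fin N → ℝ) (hA : IsGOE μ N A) :
    ∫ ω, balMax N (A ω) ∂μ
      = 2 * ∫ x, spinM (sgn N) x ∂(Measure.pi fun _ : Pairs N => gaussianReal 0 (1 / (N : ℝ≥0))) := by
  obtain ⟨hm, hsym, hind, hd, ho⟩ := hA
  have hd1 : ∀ i, Integrable (fun ω => A ω i i) μ := by
    intro i
    have h : Integrable id (μ.map (fun ω => A ω i i)) := by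
      rw [hd]; exact memLp_one_iff_integrable.mp (by exact_mod_cast memLp_id_gaussianReal 1)
    exact (integrable_map_measure (by fun_prop) (hm i i).aemeasurable).mp h
  have hd0 : ∀ i, ∫ ω, A ω i i ∂μ = 0 := by
    intro i
    have h : ∫ t, t ∂(μ.map (fun ω => A ω i i)) = ∫ ω, A ω i i ∂μ :=
      integral_map (hm i i).aemeasurable (by fun_prop)
    rw [← h, hd, integral_id_gaussianReal]
  have hind' : iIndepFun (fun (q : Pairs N) => fun ω => A ω q.1.1 q.1.2) μ :=
    iIndepFun.precomp (g := fun q : Pairs N =>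
      (⟨q.1, q.2.le⟩ : {p : Fin N × Fin N // p.1 ≤ p.2}))
      (fun a b h => by
        apply Subtype.ext
        simpa using h) hind
  have hlaw : μ.map (fun ω (q : Pairs N) => A ω q.1.1 q.1.2)
      = Measure.pi fun _ : Pairs N => gaussianReal 0 (1 / (N : ℝ≥0)) := by
    rw [hind'.map_fun_eq_pi_map (fun q => (hm _ _).aemeasurable)]
    congr 1; ext1 q
    exact ho _ _ q.2
  have hmv : Measurable (fun ω (q : Pairs N) => A ω q.1.1 q.1.2) :=
    measurable_pi_iff.mpr fun q => hm _ _
  have hM : Integrable (spinM (sgn N)) (μ.map (fun ω (q : Pairs N) => A ω q.1.1 q.1.2)) := by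
    rw [hlaw]
    have hg : Integrable (fun x : Pairs N → ℝ => ∑ i, |x i|)
        (Measure.pi fun _ : Pairs N => gaussianReal 0 (1 / (N : ℝ≥0))) := by
      apply integrable_finsetSum
      intro i _
      refine ((measurePreserving_eval (fun _ : Pairs N => gaussianReal 0 (1 / (N : ℝ≥0))) i).integrable_comp_of_integrable
        (g := fun t => t) ?_).abs
      exact memLp_one_iff_integrable.mp (by exact_mod_cast memLp_id_gaussianReal 1)
    exact hg.mono' (spinM_cont _ (sgn_abs N)).aestronglyMeasurable
      (ae_of_all _ fun x => spinM_growth _ (sgn_abs N) x)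
  have hM' : Integrable (fun ω => spinM (sgn N) (fun q : Pairs N => A ω q.1.1 q.1.2)) μ :=
    (integrable_map_measure hM.aestronglyMeasurable hmv.aemeasurable).mp hM
  rw [← hlaw, integral_map hmv.aemeasurable hM.aestronglyMeasurable]
  have e : ∀ ω, balMax N (A ω) = ∑ i, A ω i i
      + 2 * spinM (sgn N) (fun q : Pairs N => A ω q.1.1 q.1.2) :=
    fun ω => balMax_eq N (A ω) (hsym ω)
  simp only [e]
  rw [integral_add (integrable_finsetSum _ fun i _ => hd1 i) (hM'.const_mul 2),
    integral_finsetSum _ fun i _ => hd1 i, integral_const_mul]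
  simp [hd0]

lemma gauss_moments (N : ℕ) :
    Integrable (fun t : ℝ => t) (gaussianReal 0 (1 / (N : ℝ≥0))) ∧
    Integrable (fun t : ℝ => t ^ 2) (gaussianReal 0 (1 / (N : ℝ≥0))) ∧
    Integrable (fun t : ℝ => |t| ^ 3) (gaussianReal 0 (1 / (N : ℝ≥0))) ∧
    ∫ t, t ∂(gaussianReal 0 (1 / (N : ℝ≥0))) = 0 ∧
    ∫ t, t ^ 2 ∂(gaussianReal 0 (1 / (N : ℝ≥0))) = 1 / N ∧
    ∫ t, |t| ^ 3 ∂(gaussianReal 0 (1 / (N : ℝ≥0)))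
      = (∫ t, |t| ^ 3 ∂(gaussianReal 0 1)) * (1 / Real.sqrt N) ^ 3 := by
  refine ⟨memLp_one_iff_integrable.mp (by exact_mod_cast memLp_id_gaussianReal 1), ?_, ?_,
    integral_id_gaussianReal, ?_, ?_⟩
  · have h : MemLp id (2:ℕ) (gaussianReal 0 (1 / (N : ℝ≥0))) := by
      exact_mod_cast memLp_id_gaussianReal (μ := 0) (v := 1 / (N : ℝ≥0)) 2
    simpa using h.integrable_norm_pow (by norm_num)
  · have h : MemLp id (3:ℕ) (gaussianReal 0 (1 / (N : ℝ≥0))) := by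
      exact_mod_cast memLp_id_gaussianReal (μ := 0) (v := 1 / (N : ℝ≥0)) 3
    simpa using h.integrable_norm_pow (by norm_num)
  · have h := variance_id_gaussianReal (μ := 0) (v := 1 / (N : ℝ≥0))
    rw [variance_of_integral_eq_zero (by fun_prop) (by simpa using integral_id_gaussianReal)] at h
    simpa using h
  · have h : gaussianReal 0 (1 / (N : ℝ≥0))
        = (gaussianReal 0 1).map (fun x => (1 / Real.sqrt N) * x) := by
      rw [gaussianReal_map_const_mul, mul_zero, mul_one]
      congr 1
      ext
      simp
    rw [h, integral_map (by fun_prop) (by fun_prop), ← integral_mul_const]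
    congr 1; ext t
    rw [abs_mul, abs_of_nonneg (by positivity)]; ring

lemma bool_int (κ : Measure Bool) [IsProbabilityMeasure κ] {p : ℝ} (hp : 0 ≤ p)
    (hκ : κ {true} = ENNReal.ofReal p) (h : Bool → ℝ) :
    ∫ b, h b ∂κ = p * h true + (1 - p) * h false := by
  rw [integral_fintype Integrable.of_finite]
  have ht : κ.real {true} = p := by rw [measureReal_def, hκ, ENNReal.toReal_ofReal hp]
  have hf : κ.real {false} = 1 - p := by
    have : ({false} : Set Bool) = {true}ᶜ := by ext b; cases b <;> simp
    rw [this, probReal_compl_eq_one_sub (MeasurableSet.singleton true), ht]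
  simp [ht, hf]

def cen (p s : ℝ) (b : Bool) : ℝ := ((if b then 1 else 0) - p) / s

lemma graph_compare (N : ℕ) (hN : 1 ≤ N) [Nonempty (Bal N)] {p s β : ℝ} (hp0 : 0 < p) (hp1 : p ≤ 1 / 2)
    (hs : s = Real.sqrt (N * p * (1 - p))) (hβ : 0 < β)
    (κ : Pairs N → Measure Bool) [∀ q, IsProbabilityMeasure (κ q)]
    (hκ : ∀ q, κ q {true} = ENNReal.ofReal p) :
    |∫ x, spinM (sgn N) (fun q => cen p s (x q)) ∂(Measure.pi κ)
      - ∫ x, spinM (sgn N) x ∂(Measure.pi fun _ : Pairs N => gaussianReal 0 (1 / (N : ℝ≥0)))|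
      ≤ N * (1 / β + 2 * β ^ 2 * (1 / s + (∫ t, |t| ^ 3 ∂(gaussianReal 0 1)) * (1 / Real.sqrt N))) := by
  have hNpos : (0:ℝ) < N := by exact_mod_cast hN
  have hpos : 0 < N * p * (1 - p) := by
    have : 0 < 1 - p := by linarith
    positivity
  have hs0 : 0 < s := by rw [hs]; exact Real.sqrt_pos.mpr hpos
  have hs2 : s ^ 2 = N * p * (1 - p) := by rw [hs, Real.sq_sqrt hpos.le]
  have hcm : Measurable (cen p s) := measurable_of_finite _
  have hmeas : ∀ q, IsProbabilityMeasure ((κ q).map (cen p s)) :=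
    fun q => Measure.isProbabilityMeasure_map hcm.aemeasurable
  have hint : ∀ (q : Pairs N) (f : ℝ → ℝ), Continuous f → Integrable f ((κ q).map (cen p s)) := by
    intro q f hf
    rw [integrable_map_measure hf.aestronglyMeasurable hcm.aemeasurable]
    exact Integrable.of_finite
  have hval : ∀ (q : Pairs N) (f : ℝ → ℝ), Continuous f →
      ∫ t, f t ∂((κ q).map (cen p s)) = p * f ((1 - p) / s) + (1 - p) * f (- p / s) := by
    intro q f hf
    rw [integral_map hcm.aemeasurable hf.aestronglyMeasurable,
      bool_int (κ q) hp0.le (hκ q) (fun b => f (cen p s b))]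
    simp [cen]
  have hG := gauss_moments N
  have h1 : ∀ q, ∫ t, t ∂((κ q).map (cen p s)) = ∫ t, t ∂(gaussianReal 0 (1 / (N : ℝ≥0))) := by
    intro q
    rw [hval q (fun t => t) continuous_id, hG.2.2.2.1]
    field_simp; ring
  have h2 : ∀ q, ∫ t, t ^ 2 ∂((κ q).map (cen p s)) = ∫ t, t ^ 2 ∂(gaussianReal 0 (1 / (N : ℝ≥0))) := by
    intro q
    rw [hval q (fun t => t ^ 2) (by fun_prop), hG.2.2.2.2.1]
    rw [div_pow, div_pow, hs2]
    have : 1 - p ≠ 0 := by linarith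
    field_simp; ring
  have h3 : ∀ q, ∫ t, |t| ^ 3 ∂((κ q).map (cen p s)) ≤ 1 / (N * s) := by
    intro q
    rw [hval q (fun t => |t| ^ 3) (by fun_prop)]
    have e1 : |(1 - p) / s| = (1 - p) / s := abs_of_nonneg (div_nonneg (by linarith) hs0.le)
    have e2 : |- p / s| = p / s := by
      rw [neg_div, abs_neg, abs_of_nonneg (div_nonneg hp0.le hs0.le)]
    rw [e1, e2, div_pow, div_pow, pow_succ s 2, hs2]
    have h1p : 0 < 1 - p := by linarith
    have : p * ((1 - p) ^ 3 / (N * p * (1 - p) * s)) + (1 - p) * (p ^ 3 / (N * p * (1 - p) * s))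
      = ((1 - p) ^ 2 + p ^ 2) / (N * s) := by
      field_simp
    rw [this]
    gcongr
    nlinarith
  have main := spinM_compare (sgn N) (sgn_pm N) hβ (fun q => (κ q).map (cen p s))
    (fun _ => gaussianReal 0 (1 / (N : ℝ≥0)))
    (fun q => hint q _ continuous_id) (fun _ => hG.1)
    (fun q => hint q _ (by fun_prop)) (fun _ => hG.2.1)
    (fun q => hint q _ (by fun_prop)) (fun _ => hG.2.2.1) h1 h2
  have hlaw : (Measure.pi κ).map (fun x q => cen p s (x q))
      = Measure.pi (fun q => (κ q).map (cen p s)) :=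
    Measure.pi_map_pi (fun q => hcm.aemeasurable)
  rw [← hlaw, integral_map (measurable_of_finite _).aemeasurable
    (spinM_cont _ (sgn_abs N)).aestronglyMeasurable] at main
  refine main.trans ?_
  set K := ∫ t, |t| ^ 3 ∂(gaussianReal 0 1) with hK
  have hK0 : 0 ≤ K := integral_nonneg fun t => by positivity
  have hsum : ∑ q : Pairs N, 2 * β ^ 2 * (∫ t, |t| ^ 3 ∂((κ q).map (cen p s))
      + ∫ t, |t| ^ 3 ∂(gaussianReal 0 (1 / (N : ℝ≥0))))
      ≤ ∑ q : Pairs N, 2 * β ^ 2 * (1 / (N * s) + K * (1 / Real.sqrt N) ^ 3) := by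
    apply Finset.sum_le_sum
    intro q _
    rw [hG.2.2.2.2.2]
    have := h3 q
    gcongr
  rw [Finset.sum_const, nsmul_eq_mul, Finset.card_univ] at hsum
  have hb : (Fintype.card (Pairs N) : ℝ) * (2 * β ^ 2 * (1 / (N * s) + K * (1 / Real.sqrt N) ^ 3))
      ≤ (N:ℝ) ^ 2 * (2 * β ^ 2 * (1 / (N * s) + K * (1 / Real.sqrt N) ^ 3)) := by
    gcongr
    exact card_pairs_le N
  have hr : (Real.sqrt N) ^ 2 = N := Real.sq_sqrt hNpos.le
  have hr0 : 0 < Real.sqrt N := Real.sqrt_pos.mpr hNpos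
  have he : (N:ℝ) ^ 2 * (2 * β ^ 2 * (1 / (N * s) + K * (1 / Real.sqrt N) ^ 3))
      = N * (2 * β ^ 2 * (1 / s + K * (1 / Real.sqrt N))) := by
    have : (1 / Real.sqrt N) ^ 3 = 1 / Real.sqrt N * (1 / N) := by
      rw [pow_succ, div_pow, hr]; ring
    rw [this]; field_simp
  have hlog : Real.log (Fintype.card (Bal N)) / β ≤ N * (1 / β) := by
    rw [mul_one_div]; gcongr; exact log_card_bal N
  rw [mul_add]
  linarith

lemma graph_conc (N : ℕ) (hN : 1 ≤ N) [Nonempty (Bal N)] {p s δ : ℝ} (hs : 0 < s) (hδ : 0 < δ)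
    (κ : Pairs N → Measure Bool) [∀ q, IsProbabilityMeasure (κ q)] :
    (Measure.pi κ) {x | δ ≤ |spinM (sgn N) (fun q => cen p s (x q)) / N
        - (∫ y, spinM (sgn N) (fun q => cen p s (y q)) ∂(Measure.pi κ)) / N|}
      ≤ ENNReal.ofReal ((1 / s) ^ 2 / δ ^ 2) := by
  have hNpos : (0:ℝ) < N := by exact_mod_cast hN
  rw [← integral_div]
  refine (chebyshev_pi κ (1 / (s * N)) (fun x => spinM (sgn N) (fun q => cen p s (x q)) / N) ?_ hδ).trans ?_
  · intro x i t
    rw [← sub_div, abs_div, abs_of_pos hNpos, div_le_iff₀ hNpos]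
    refine (spinM_lip _ (sgn_abs N) _ _).trans ?_
    rw [Finset.sum_eq_single i]
    · rw [Function.update_self]
      have e : 1 / (s * N) * N = 1 / s := by field_simp
      rw [e]
      unfold cen
      rw [← sub_div, abs_div, abs_of_pos hs]
      gcongr
      cases x i <;> cases t <;> simp
      have : -p - (1 - p) = -1 := by ring
      rw [this]; simp
    · intro j _ hj
      rw [Function.update_of_ne hj]; simp
    · simp
  · apply ENNReal.ofReal_le_ofReal
    gcongr
    calc (Fintype.card (Pairs N) : ℝ) * (1 / (s * N)) ^ 2 ≤ (N:ℝ) ^ 2 * (1 / (s * N)) ^ 2 := by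
          gcongr; exact card_pairs_le N
      _ = (1 / s) ^ 2 := by field_simp
/-- **Universality of the extremal bisection of sparse Erdős–Rényi graphs**
(Dembo–Montanari–Sen).  Let `c*` be the limit of `(1/(2N)) E[max_{σ ∈ Σ_N} ⟨σ, A_N σ⟩]` for
`A_N ~ GOE(N)` over even `N`.  If `G_N` is an Erdős–Rényi graph with edge probability `p_N`,
`N p_N → ∞`, `p_N ≤ 1/2`, then `(1/(2N)) max_{σ ∈ Σ_N} ⟨σ, A_{G_N} σ⟩ / √(N p_N (1−p_N)) → c*`
in probability (over even `N = 2n`). -/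
theorem sparse_bisection_universality
    {Ω₁ : Type*} [MeasurableSpace Ω₁] (μ₁ : Measure Ω₁) [IsProbabilityMeasure μ₁]
    (A : (N : ℕ) → Ω₁ → Fin N → Fin N → ℝ)
    (hGOE : ∀ N, 1 ≤ N → IsGOE μ₁ N (A N))
    (cstar : ℝ)
    (hc : Tendsto (fun n : ℕ =>
        (1 / (2 * ((2 * n : ℕ) : ℝ))) * ∫ ω, balMax (2 * n) (A (2 * n) ω) ∂μ₁)
      atTop (nhds cstar))
    {Ω₂ : Type*} [MeasurableSpace Ω₂] (μ₂ : Measure Ω₂) [IsProbabilityMeasure μ₂]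
    (p : ℕ → ℝ) (hp : ∀ N, 0 ≤ p N ∧ p N ≤ 1 / 2)
    (hnp : Tendsto (fun N : ℕ => (N : ℝ) * p N) atTop atTop)
    (e : Ω₂ → (N : ℕ) → Fin N → Fin N → Bool)
    (hemeas : ∀ N i j, Measurable fun ω => e ω N i j)
    (hesym : ∀ ω N i j, e ω N i j = e ω N j i)
    (hediag : ∀ ω N i, e ω N i i = false)
    (heindep : ∀ N : ℕ, iIndepFun
      (fun (q : {q : Fin N × Fin N // q.1 < q.2}) => fun ω => e ω N q.1.1 q.1.2) μ₂)
    (heprob : ∀ N, ∀ i j : Fin N, i < j →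
      μ₂ {ω | e ω N i j = true} = ENNReal.ofReal (p N)) :
    ∀ ε : ℝ, 0 < ε →
      Tendsto (fun n : ℕ =>
        μ₂ {ω | ε <
          |((1 / (2 * ((2 * n : ℕ) : ℝ))) *
              balMax (2 * n) (fun i j => if e ω (2 * n) i j then (1 : ℝ) else 0)) /
            Real.sqrt (((2 * n : ℕ) : ℝ) * p (2 * n) * (1 - p (2 * n)))
          - cstar|})
        atTop (nhds 0) := by
  intro ε hε
  set s : ℕ → ℝ := fun n => Real.sqrt (((2 * n : ℕ) : ℝ) * p (2 * n) * (1 - p (2 * n))) with hs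
  set κ : (n : ℕ) → Pairs (2 * n) → Measure Bool :=
    fun n q => μ₂.map (fun ω => e ω (2 * n) q.1.1 q.1.2) with hκdef
  have hκp : ∀ n q, IsProbabilityMeasure (κ n q) :=
    fun n q => Measure.isProbabilityMeasure_map (hemeas _ _ _).aemeasurable
  have hκ : ∀ n q, κ n q {true} = ENNReal.ofReal (p (2 * n)) := by
    intro n q
    simp only [hκdef]
    rw [Measure.map_apply (hemeas _ _ _) (MeasurableSet.singleton true)]
    exact heprob (2 * n) q.1.1 q.1.2 q.2
  have hlaw : ∀ n, μ₂.map (fun ω (q : Pairs (2 * n)) => e ω (2 * n) q.1.1 q.1.2)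
      = Measure.pi (κ n) :=
    fun n => (heindep (2 * n)).map_fun_eq_pi_map (fun q => (hemeas _ _ _).aemeasurable)
  set I : ℕ → ℝ := fun n => (∫ x, spinM (sgn (2 * n)) (fun q => cen (p (2 * n)) (s n) (x q))
    ∂(Measure.pi (κ n))) / ((2 * n : ℕ) : ℝ) with hI
  set J : ℕ → ℝ := fun n =>
        (1 / (2 * ((2 * n : ℕ) : ℝ))) * ∫ ω, balMax (2 * n) (A (2 * n) ω) ∂μ₁ with hJ
  set K := ∫ t, |t| ^ 3 ∂(gaussianReal 0 1) with hK
  have h2n : Tendsto (fun n : ℕ => 2 * n) atTop atTop :=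
    tendsto_id.const_mul_atTop' (by norm_num)
  have hnp2 : Tendsto (fun n : ℕ => ((2 * n : ℕ) : ℝ) * p (2 * n)) atTop atTop := hnp.comp h2n
  have hst : Tendsto s atTop atTop := by
    refine Real.tendsto_sqrt_atTop.comp ?_
    refine tendsto_atTop_mono (fun n => ?_) (hnp2.atTop_div_const (by norm_num : (0:ℝ) < 2))
    have h1 := hp (2 * n)
    have h0 : 0 ≤ ((2 * n : ℕ) : ℝ) * p (2 * n) := mul_nonneg (by positivity) h1.1
    nlinarith [h1.2]
  have hinv : Tendsto (fun n => 1 / s n) atTop (nhds 0) := by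
    refine hst.inv_tendsto_atTop.congr fun n => ?_
    rw [Pi.inv_apply, one_div]
  have hsq : Tendsto (fun n : ℕ => 1 / Real.sqrt ((2 * n : ℕ) : ℝ)) atTop (nhds 0) := by
    have : Tendsto (fun n : ℕ => Real.sqrt ((2 * n : ℕ) : ℝ)) atTop atTop :=
      Real.tendsto_sqrt_atTop.comp (tendsto_natCast_atTop_atTop.comp h2n)
    refine this.inv_tendsto_atTop.congr fun n => ?_
    rw [Pi.inv_apply, one_div]
  have hgood : ∀ᶠ n : ℕ in atTop, 1 ≤ n ∧ 0 < s n ∧ 0 < p (2 * n) := by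
    filter_upwards [eventually_ge_atTop 1, hst.eventually_gt_atTop 0,
      hnp2.eventually_gt_atTop 0] with n h1 h2 h3
    exact ⟨h1, h2, pos_of_mul_pos_right h3 (by positivity)⟩
  have hcomp : ∀ β : ℝ, 0 < β → ∀ n : ℕ, 1 ≤ n → 0 < s n → 0 < p (2 * n) →
      |I n - J n| ≤ 1 / β + 2 * β ^ 2 * (1 / s n + K * (1 / Real.sqrt ((2 * n : ℕ) : ℝ))) := by
    intro β hβ n hn hsn hpn
    have hne := bal_nonempty n
    have hNpos : (0:ℝ) < ((2 * n : ℕ) : ℝ) := by exact_mod_cast (by omega : 0 < 2 * n)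
    have := graph_compare (2 * n) (by omega) hpn (hp (2 * n)).2 (s := s n) rfl hβ (κ n) (hκ n)
    have hg := goe_integral μ₁ (2 * n) (A (2 * n)) (hGOE (2 * n) (by omega))
    have eJ : J n = (∫ x, spinM (sgn (2 * n)) x ∂(Measure.pi fun _ : Pairs (2 * n) =>
        gaussianReal 0 (1 / ((2 * n : ℕ) : ℝ≥0)))) / ((2 * n : ℕ) : ℝ) := by
      simp only [hJ]
      rw [hg]; field_simp
    rw [eJ]
    simp only [hI]
    rw [← sub_div, abs_div, abs_of_pos hNpos, div_le_iff₀ hNpos, mul_comm _ (((2 * n : ℕ) : ℝ))]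
    exact this
  have hIJ : Tendsto (fun n => I n - J n) atTop (nhds 0) := by
    rw [Metric.tendsto_atTop']
    have : ∀ η : ℝ, 0 < η → ∀ᶠ n in atTop, |I n - J n| < η := by
      intro η hη
      have hr : Tendsto (fun n : ℕ => 2 * (2 / η) ^ 2 *
          (1 / s n + K * (1 / Real.sqrt ((2 * n : ℕ) : ℝ)))) atTop (nhds 0) := by
        have := (hinv.add (hsq.const_mul K)).const_mul (2 * (2 / η) ^ 2)
        simpa using this
      filter_upwards [hgood, hr.eventually_lt_const (half_pos hη)] with n hn hlt
      have := hcomp (2 / η) (by positivity) n hn.1 hn.2.1 hn.2.2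
      have e1 : 1 / (2 / η) = η / 2 := by field_simp
      rw [e1] at this
      linarith
    intro η hη
    obtain ⟨n0, h⟩ := eventually_atTop.mp (this η hη)
    exact ⟨n0, fun n hn => by rw [Real.dist_eq, sub_zero]; exact h n hn.le⟩
  have hps : Tendsto (fun n : ℕ => p (2 * n) / (2 * s n)) atTop (nhds 0) := by
    refine squeeze_zero' ?_ ?_ hinv
    · filter_upwards [hgood] with n hn
      have := hn.2.1; have := hn.2.2; positivity
    · filter_upwards [hgood] with n hn
      have h1 := hn.2.1
      rw [div_le_div_iff₀ (by positivity) h1]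
      nlinarith [(hp (2 * n)).2]
  have hlim : Tendsto (fun n => I n - p (2 * n) / (2 * s n)) atTop (nhds cstar) := by
    have := (hIJ.add hc).sub hps
    simp only [zero_add, sub_zero] at this
    refine this.congr fun n => ?_
    simp only [hJ]; ring
  have hclose : ∀ᶠ n in atTop, |I n - p (2 * n) / (2 * s n) - cstar| < ε / 2 := by
    have := Metric.tendsto_nhds.mp hlim (ε / 2) (half_pos hε)
    exact this
  have hup : Tendsto (fun n => ENNReal.ofReal ((1 / s n) ^ 2 / (ε / 2) ^ 2)) atTop (nhds 0) := by
    have : Tendsto (fun n => (1 / s n) ^ 2 / (ε / 2) ^ 2) atTop (nhds 0) := by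
      simpa using (hinv.pow 2).div_const ((ε / 2) ^ 2)
    simpa using ENNReal.tendsto_ofReal this
  refine tendsto_of_tendsto_of_tendsto_of_le_of_le' tendsto_const_nhds hup
    (Eventually.of_forall fun _ => zero_le) ?_
  filter_upwards [hgood, hclose] with n hn hcl
  obtain ⟨hn1, hsn, hpn⟩ := hn
  have hne := bal_nonempty n
  have hNpos : (0:ℝ) < ((2 * n : ℕ) : ℝ) := by exact_mod_cast (by omega : 0 < 2 * n)
  have hconc := graph_conc (2 * n) (by omega) (p := p (2 * n)) hsn (half_pos hε) (κ n)
  refine le_trans ?_ hconc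
  have hmv : Measurable (fun ω (q : Pairs (2 * n)) => e ω (2 * n) q.1.1 q.1.2) :=
    measurable_pi_iff.mpr fun q => hemeas _ _ _
  rw [← hlaw n, Measure.map_apply hmv (Set.toFinite _).measurableSet]
  apply measure_mono
  intro ω hω
  simp only [Set.mem_ofPred_eq, Set.mem_preimage] at hω ⊢
  rw [hlaw n]
  have hid : ((1 / (2 * ((2 * n : ℕ) : ℝ))) *
              balMax (2 * n) (fun i j => if e ω (2 * n) i j then (1 : ℝ) else 0)) / s n
      = spinM (sgn (2 * n)) (fun q => cen (p (2 * n)) (s n) (e ω (2 * n) q.1.1 q.1.2))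
        / ((2 * n : ℕ) : ℝ) - p (2 * n) / (2 * s n) := by
    rw [balMax_eq (2 * n) _ (fun i j => by rw [hesym])]
    have hx : (fun q : Pairs (2 * n) => if e ω (2 * n) q.1.1 q.1.2 then (1 : ℝ) else 0)
        = fun q => s n * cen (p (2 * n)) (s n) (e ω (2 * n) q.1.1 q.1.2) + p (2 * n) := by
      ext q
      unfold cen
      field_simp
      ring
    rw [hx, spinM_affine _ _ _ _ hsn.le]
    simp only [hediag]
    simp only [Bool.false_eq_true, if_false, Finset.sum_const_zero, zero_add]
    field_simp
  rw [hid] at hω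
  change ε / 2 ≤ |spinM (sgn (2 * n)) (fun q => cen (p (2 * n)) (s n) (e ω (2 * n) q.1.1 q.1.2))
        / ((2 * n : ℕ) : ℝ) - I n|
  set Y := spinM (sgn (2 * n)) (fun q => cen (p (2 * n)) (s n) (e ω (2 * n) q.1.1 q.1.2))
        / ((2 * n : ℕ) : ℝ) with hY
  have e3 : Y - p (2 * n) / (2 * s n) - cstar
      = (Y - I n) + (I n - p (2 * n) / (2 * s n) - cstar) := by ring
  rw [e3] at hω
  have := abs_add_le (Y - I n) (I n - p (2 * n) / (2 * s n) - cstar)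
  linarith

end
end
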